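/- arXiv:1406.0373 — 6 statements merged into one kernel-verified Lean document; each statement's English description precedes it below -/
import Mathlib

section
/- Fix integers k ≥ r ≥ 3, an alphabet size q ≥ 2, an output length l with 1 ≤ l ≤ k−1, and for each n local functions f_1,…,f_m : [q]^k → [q]^l that are all (r−1)-wise independent. Let u ∈ ω(1) ∩ o(n), let μ < μ_c(k,r) be a constant, and set m = ⌈μ·n^{r−1}/u(n)^{r−2}⌉. Generate the bipartite graph from the random ensemble, let x* ∈ [q]^n be any planted assignment, set y_a = f_a(x*|_{∂(a)}) for each a, and consider the local marginal polytope LOCAL for these constraints with the additional requirement that b_i(x*_i) = 1 for i = 1,…,u(n). Then there is a constant c > 0 such that, for all sufficiently large n, with probability at least 1 − exp(−c·u(n)) there exists a zero-optimal point of LOCAL whose integral part has size less than (1 + 1/(r−2))·u(n); in particular the LP relaxation cannot determine u(n)/(r−2) input variables beyond the u(n) known ones. -/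
open Filter Finset Asymptotics

noncomputable section

/-- Neighborhood `∂(a)` of constraint `a` in the bipartite graph given by `ω`. -/
def nbhd {n m k : ℕ} (ω : Fin m → (Fin k ↪ Fin n)) (a : Fin m) : Finset (Fin n) :=
  Finset.univ.image (ω a)

/-- `V` is a `d`-stopping set: every constraint meets `V` in `0` or at least `d` variables. -/
def IsStoppingSet {n m k : ℕ} (d : ℕ) (ω : Fin m → (Fin k ↪ Fin n))
    (V : Finset (Fin n)) : Prop :=
  ∀ a : Fin m, (nbhd ω a ∩ V).card = 0 ∨ d ≤ (nbhd ω a ∩ V).card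

/-- Probability of an event under the uniform random bipartite-graph ensemble:
each of the `m` constraints independently picks a uniformly random `k`-tuple of
distinct indices from `{1,…,n}` (an embedding `Fin k ↪ Fin n`). -/
def prG (n m k : ℕ) (P : (Fin m → (Fin k ↪ Fin n)) → Prop) : ℝ :=
  letI := Classical.decPred P
  ((Finset.univ.filter P).card : ℝ) / (Fintype.card (Fin m → (Fin k ↪ Fin n)) : ℝ)

/-- `u ∈ ω(1) ∩ o(n)`. -/
def UGood (u : ℕ → ℕ) : Prop :=
  Tendsto (fun n => (u n : ℝ)) atTop atTop ∧
    Tendsto (fun n => (u n : ℝ) / (n : ℝ)) atTop (nhds 0)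

/-- `μ_c(k,r) = binom(k,r)⁻¹ (r-2)^(r-2) / (r (r-1)^(r-1))`. -/
def muc (k r : ℕ) : ℝ :=
  ((k.choose r : ℝ))⁻¹ * (((r : ℝ) - 2) ^ (r - 2) / ((r : ℝ) * ((r : ℝ) - 1) ^ (r - 1)))

/-- `φ_{k,r}(μ,λ,τ) = μ (e^{(k-r+1)λ} - 1) binom(k,r-1) (1+τ)^{r-1} - λτ`. -/
def phiE (k r : ℕ) (μ lam τ : ℝ) : ℝ :=
  μ * (Real.exp (((k : ℝ) - (r : ℝ) + 1) * lam) - 1) * (k.choose (r - 1) : ℝ)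
      * (1 + τ) ^ (r - 1)
    - lam * τ

/-- Membership in the local marginal polytope LOCAL: each `B a` is a distribution on
`[q]^k`, each `b i` is a distribution on `[q]`, and the marginalization conditions hold. -/
def MemLOCAL {n m q k : ℕ} (nb : Fin m → (Fin k ↪ Fin n))
    (b : Fin n → Fin q → ℝ) (B : Fin m → (Fin k → Fin q) → ℝ) : Prop :=
  (∀ i x, 0 ≤ b i x) ∧ (∀ i, ∑ x, b i x = 1) ∧
  (∀ a z, 0 ≤ B a z) ∧ (∀ a, ∑ z, B a z = 1) ∧
  (∀ (a : Fin m) (j : Fin k) (x : Fin q),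
    b (nb a j) x = ∑ z : Fin k → Fin q, if z j = x then B a z else 0)

/-- A point of LOCAL is zero-optimal if each `B a` is supported on `f_a⁻¹(y_a)`. -/
def ZeroOptimal {m q k l : ℕ} (f : Fin m → (Fin k → Fin q) → (Fin l → Fin q))
    (y : Fin m → Fin l → Fin q) (B : Fin m → (Fin k → Fin q) → ℝ) : Prop :=
  ∀ a z, B a z ≠ 0 → f a z = y a

/-- Integral part of a point of LOCAL. -/
def integralPart {n q : ℕ} (b : Fin n → Fin q → ℝ) : Finset (Fin n) :=
  letI := Classical.decPred fun i : Fin n => ∃ x : Fin q, b i x = 1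
  Finset.univ.filter fun i : Fin n => ∃ x : Fin q, b i x = 1

/-- `f : [q]^k → [q]^l` is `w`-wise independent. -/
def WiseIndep (q k l w : ℕ) (f : (Fin k → Fin q) → (Fin l → Fin q)) : Prop :=
  ∀ T : Finset (Fin k), T.card ≤ w → ∀ xT : Fin k → Fin q, ∀ y : Fin l → Fin q,
    (Finset.univ.filter fun x : Fin k → Fin q =>
        (∀ i ∈ T, x i = xT i) ∧ f x = y).card
      = q ^ (k - T.card - l)

/-- Minimum Hamming distance of a code. -/
def minHammingDist {A : Type*} [DecidableEq A] {k : ℕ} (M : Finset (Fin k → A)) : ℕ :=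
  sInf {d | ∃ x ∈ M, ∃ y ∈ M, x ≠ y ∧ hammingDist x y = d}

/-- `M` is an MDS code of length `k` and dimension `r-1`. -/
def IsMDSCode (A : Type*) [Fintype A] [DecidableEq A] (k r : ℕ)
    (M : Finset (Fin k → A)) : Prop :=
  M.card = Fintype.card A ^ (r - 1) ∧ minHammingDist M = k - r + 2

/-- `f` has MDS inverse image of dimension `r-1`. -/
def HasMDSInv (q k r : ℕ) (f : (Fin k → Fin q) → (Fin (k - r + 1) → Fin q)) : Prop :=
  ∀ y : Fin (k - r + 1) → Fin q,
    IsMDSCode (Fin q) k r (Finset.univ.filter fun x => f x = y)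

instance {n m k : ℕ} (d : ℕ) (ω : Fin m → (Fin k ↪ Fin n)) :
    DecidablePred fun V : Finset (Fin n) => IsStoppingSet d ω V := fun V => by
  unfold IsStoppingSet; infer_instance
def hit {n k : ℕ} (e : Fin k ↪ Fin n) (D : Finset (Fin n)) : ℕ :=
  (Finset.univ.filter fun j => e j ∈ D).card

def KK {n m k : ℕ} (U : Finset (Fin n)) (s : ℕ) (ω : Fin m → (Fin k ↪ Fin n))
    (D : Finset (Fin n)) : Finset (Fin n) :=
  U ∪ (Finset.univ.filter fun a => s ≤ hit (ω a) D).biUnion fun a => Finset.univ.image (ω a)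

open Classical in
def stepD {n : ℕ} (K D : Finset (Fin n)) : Finset (Fin n) :=
  if h : (K \ D).Nonempty then insert h.choose D
  else if h' : (Dᶜ).Nonempty then insert h'.choose D else D

def proc {n m k : ℕ} (U : Finset (Fin n)) (s : ℕ) (ω : Fin m → (Fin k ↪ Fin n)) :
    ℕ → Finset (Fin n)
  | 0 => ∅
  | t + 1 => stepD (KK U s ω (proc U s ω t)) (proc U s ω t)

lemma hit_mono {n k : ℕ} (e : Fin k ↪ Fin n) {D D' : Finset (Fin n)} (h : D ⊆ D') :
    hit e D ≤ hit e D' := by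
  unfold hit
  apply Finset.card_le_card
  intro j hj
  simp only [Finset.mem_filter, Finset.mem_univ, true_and] at *
  exact h hj

lemma subset_stepD {n : ℕ} (K D : Finset (Fin n)) : D ⊆ stepD K D := by
  unfold stepD
  split_ifs
  · exact Finset.subset_insert _ _
  · exact Finset.subset_insert _ _
  · exact subset_rfl

lemma card_stepD {n : ℕ} (K D : Finset (Fin n)) (h : D.card < n) :
    (stepD K D).card = D.card + 1 := by
  unfold stepD
  split_ifs with h1 h2
  · have := h1.choose_spec
    rw [Finset.mem_sdiff] at this
    exact Finset.card_insert_of_notMem this.2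
  · have := h2.choose_spec
    rw [Finset.mem_compl] at this
    exact Finset.card_insert_of_notMem this
  · exfalso
    apply h2
    rw [← Finset.card_pos, Finset.card_compl, Fintype.card_fin]
    omega

lemma card_proc {n m k : ℕ} (U : Finset (Fin n)) (s : ℕ) (ω : Fin m → (Fin k ↪ Fin n)) (t : ℕ)
    (h : t ≤ n) : (proc U s ω t).card = t := by
  induction t with
  | zero => rfl
  | succ t ih =>
    have := ih (by omega)
    rw [proc, card_stepD _ _ (by omega), this]

lemma proc_mono {n m k : ℕ} (U : Finset (Fin n)) (s : ℕ) (ω : Fin m → (Fin k ↪ Fin n))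
    {t t' : ℕ} (h : t ≤ t') : proc U s ω t ⊆ proc U s ω t' := by
  induction h with
  | refl => exact subset_rfl
  | step _ ih => exact ih.trans (subset_stepD _ _)

lemma stepD_subset {n : ℕ} (K D : Finset (Fin n)) (h : ¬ K ⊆ D) (h2 : D ⊆ K) :
    stepD K D ⊆ K := by
  unfold stepD
  have h1 : (K \ D).Nonempty := Finset.sdiff_nonempty.2 h
  rw [dif_pos h1]
  have := h1.choose_spec
  rw [Finset.mem_sdiff] at this
  exact Finset.insert_subset this.1 h2

lemma KK_mono {n m k : ℕ} (U : Finset (Fin n)) (s : ℕ) (ω : Fin m → (Fin k ↪ Fin n))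
    {D D' : Finset (Fin n)} (h : D ⊆ D') : KK U s ω D ⊆ KK U s ω D' := by
  unfold KK
  apply Finset.union_subset_union_right
  apply Finset.biUnion_subset_biUnion_of_subset_left
  intro a ha
  simp only [Finset.mem_filter, Finset.mem_univ, true_and] at *
  exact ha.trans (hit_mono _ h)

lemma hit_eq {n k : ℕ} (e : Fin k ↪ Fin n) (D : Finset (Fin n)) :
    hit e D = ((Finset.univ.image e) ∩ D).card := by
  unfold hit
  rw [← Finset.card_image_of_injective _ e.injective]
  congr 1
  ext i
  simp only [Finset.mem_image, Finset.mem_filter, Finset.mem_univ, true_and, Finset.mem_inter]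
  constructor
  · rintro ⟨j, h1, rfl⟩
    exact ⟨⟨j, rfl⟩, h1⟩
  · rintro ⟨⟨j, rfl⟩, h1⟩
    exact ⟨j, h1, rfl⟩

/-- Number of activated constraints. -/
def NN {n m k : ℕ} (s : ℕ) (ω : Fin m → (Fin k ↪ Fin n)) (D : Finset (Fin n)) : ℕ :=
  (Finset.univ.filter fun a => s ≤ hit (ω a) D).card

lemma KK_card_step {n m k : ℕ} (U : Finset (Fin n)) (s : ℕ) (ω : Fin m → (Fin k ↪ Fin n))
    (D D' : Finset (Fin n)) (h : D ⊆ D') (h' : D' ⊆ KK U s ω D) :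
    (KK U s ω D').card + (k - s) * NN s ω D ≤ (KK U s ω D).card + (k - s) * NN s ω D' := by
  classical
  set A := Finset.univ.filter fun a => s ≤ hit (ω a) D with hA
  set A' := Finset.univ.filter fun a => s ≤ hit (ω a) D' with hA'
  have hAA : A ⊆ A' := by
    intro a ha
    simp only [hA, hA', Finset.mem_filter, Finset.mem_univ, true_and] at *
    exact ha.trans (hit_mono _ h)
  have hsub : KK U s ω D' ⊆ KK U s ω D ∪ (A' \ A).biUnion
      fun a => (Finset.univ.image (ω a)) \ KK U s ω D := by
    intro i hi
    by_cases hiK : i ∈ KK U s ω D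
    · exact Finset.mem_union_left _ hiK
    apply Finset.mem_union_right
    rw [KK, Finset.mem_union] at hi
    rcases hi with hi | hi
    · exact absurd (Finset.mem_union_left _ hi) hiK
    rw [Finset.mem_biUnion] at hi ⊢
    obtain ⟨a, ha, hi⟩ := hi
    refine ⟨a, ?_, Finset.mem_sdiff.2 ⟨hi, hiK⟩⟩
    refine Finset.mem_sdiff.2 ⟨ha, fun haA => hiK ?_⟩
    exact Finset.mem_union_right _ (Finset.mem_biUnion.2 ⟨a, haA, hi⟩)
  have h1 : ((A' \ A).biUnion fun a => (Finset.univ.image (ω a)) \ KK U s ω D).card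
      ≤ (A' \ A).card * (k - s) := by
    apply Finset.card_biUnion_le_card_mul
    intro a ha
    have ha' : s ≤ hit (ω a) D' := by
      have := (Finset.mem_sdiff.1 ha).1
      simpa [hA'] using this
    have h3 := ha'.trans (hit_mono (ω a) h')
    rw [hit_eq] at h3
    have h4 := Finset.card_sdiff_add_card_inter (Finset.univ.image (ω a)) (KK U s ω D)
    rw [Finset.card_image_of_injective _ (ω a).injective, Finset.card_univ, Fintype.card_fin] at h4
    omega
  have h2 := (Finset.card_le_card hsub).trans (Finset.card_union_le _ _)
  have h3 : (A' \ A).card + A.card = A'.card := Finset.card_sdiff_add_card_eq_card hAA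
  have e1 : NN s ω D = A.card := rfl
  have e2 : NN s ω D' = A'.card := rfl
  rw [e1, e2, ← h3]
  nlinarith

lemma proc_bound {n m k : ℕ} (U : Finset (Fin n)) (s : ℕ) (hs : 1 ≤ s)
    (ω : Fin m → (Fin k ↪ Fin n))
    (T : ℕ) (hbad : ∀ t < T, ¬ KK U s ω (proc U s ω t) ⊆ proc U s ω t) :
    proc U s ω T ⊆ KK U s ω (proc U s ω T) ∧
    (KK U s ω (proc U s ω T)).card ≤ U.card + (k - s) * NN s ω (proc U s ω T) := by
  induction T with
  | zero =>
    have : KK U s ω (∅ : Finset (Fin n)) = U := by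
      unfold KK
      have : (Finset.univ.filter fun a => s ≤ hit (ω a) (∅ : Finset (Fin n))) = ∅ := by
        rw [Finset.filter_eq_empty_iff]
        intro a _
        simp [hit]
        omega
      rw [this]; simp
    simp only [proc, this]
    simp
  | succ T ih =>
    obtain ⟨h1, h2⟩ := ih (fun t ht => hbad t (by omega))
    have h3 : proc U s ω (T+1) ⊆ KK U s ω (proc U s ω T) :=
      stepD_subset _ _ (hbad T (by omega)) h1
    have h4 : proc U s ω T ⊆ proc U s ω (T+1) := subset_stepD _ _
    refine ⟨h3.trans (KK_mono _ _ _ h4), ?_⟩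
    have := KK_card_step U s ω _ _ h4 h3
    omega

lemma exists_perm {n : ℕ} : ∀ (d : ℕ) (A B : Finset (Fin n)), A.card = B.card → (A \ B).card = d →
    ∃ π : Equiv.Perm (Fin n), (∀ x, π x ∈ B ↔ x ∈ A) ∧ ∀ x ∈ A ∩ B, π x = x := by
  intro d
  induction d with
  | zero =>
    intro A B h h0
    have h1 : A ⊆ B := Finset.sdiff_eq_empty_iff_subset.1 (Finset.card_eq_zero.1 h0)
    have h2 : A = B := Finset.eq_of_subset_of_card_le h1 h.ge
    exact ⟨1, by simp [h2]⟩
  | succ d ih =>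
    intro A B h h0
    have h1 : (A \ B).Nonempty := Finset.card_pos.1 (by omega)
    have h2 : (B \ A).Nonempty := Finset.card_pos.1 (by
      have := Finset.card_sdiff_add_card_inter A B
      have := Finset.card_sdiff_add_card_inter B A
      rw [Finset.inter_comm] at this
      omega)
    obtain ⟨x, hx⟩ := h1
    obtain ⟨y, hy⟩ := h2
    rw [Finset.mem_sdiff] at hx hy
    obtain ⟨π, hπ, hπ2⟩ := ih (insert y (A.erase x)) B (by
      rw [Finset.card_insert_of_notMem (by simp [hy.2]), Finset.card_erase_of_mem hx.1]
      have : 0 < A.card := Finset.card_pos.2 ⟨x, hx.1⟩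
      omega) (by
      have : insert y (A.erase x) \ B = (A \ B).erase x := by
        ext z
        simp only [Finset.mem_sdiff, Finset.mem_insert, Finset.mem_erase]
        constructor
        · rintro ⟨rfl | h, h'⟩
          · exact absurd hy.1 h'
          · exact ⟨h.1, h.2, h'⟩
        · rintro ⟨h, h', h''⟩
          exact ⟨Or.inr ⟨h, h'⟩, h''⟩
      rw [this, Finset.card_erase_of_mem (by simp [hx]), h0]
      rfl)
    refine ⟨(Equiv.swap x y).trans π, fun z => ?_, fun z hz => ?_⟩
    · rw [Equiv.trans_apply, hπ]
      by_cases hzx : z = x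
      · subst hzx; simp [hx.1]
      by_cases hzy : z = y
      · subst hzy
        simp [hy.2]
        intro h; exact absurd h.symm hzx
      · rw [Equiv.swap_apply_of_ne_of_ne hzx hzy]
        simp [hzx, hzy]
    · rw [Finset.mem_inter] at hz
      have hzx : z ≠ x := by rintro rfl; exact hx.2 hz.2
      have hzy : z ≠ y := by rintro rfl; exact hy.2 hz.1
      rw [Equiv.trans_apply, Equiv.swap_apply_of_ne_of_ne hzx hzy]
      exact hπ2 z (by simp [hzx, hzy, hz])

lemma proc_inv {n m k : ℕ} (U : Finset (Fin n)) (s : ℕ) (ω ω' : Fin m → (Fin k ↪ Fin n)) (t : ℕ)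
    (π : Equiv.Perm (Fin n)) (hπ : ∀ x ∈ proc U s ω t, π x = x)
    (h : ∀ a, ω' a = if s ≤ hit (ω a) (proc U s ω t) then ω a else (ω a).trans π.toEmbedding) :
    ∀ t' ≤ t + 1, proc U s ω' t' = proc U s ω t' := by
  intro t'
  induction t' with
  | zero => intro _; rfl
  | succ t' ih =>
    intro ht
    have ih := ih (by omega)
    have hsub : proc U s ω t' ⊆ proc U s ω t := proc_mono _ _ _ (by omega)
    simp only [proc]
    rw [ih]
    congr 1
    have hh : ∀ a, hit (ω' a) (proc U s ω t') = hit (ω a) (proc U s ω t') := by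
      intro a
      rw [h a]
      split_ifs with hc
      · rfl
      · unfold hit
        congr 1
        ext j
        simp only [Finset.mem_filter, Finset.mem_univ, true_and, Function.Embedding.trans_apply,
          Equiv.coe_toEmbedding]
        constructor
        · intro hj
          have h1 := hπ _ (hsub hj)
          rw [π.injective h1] at hj
          exact hj
        · intro hj
          rw [hπ _ (hsub hj)]; exact hj
    unfold KK
    simp only [hh]
    congr 1
    apply Finset.biUnion_congr rfl
    intro a ha
    simp only [Finset.mem_filter, Finset.mem_univ, true_and] at ha
    rw [h a, if_pos (ha.trans (hit_mono _ hsub))]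

def FF {n m k : ℕ} (s : ℕ) (E : ℝ) (ω : Fin m → (Fin k ↪ Fin n)) (D : Finset (Fin n)) : ℝ :=
  ∏ a, if s ≤ hit (ω a) D then E else 1

lemma hybrid_step {n m k : ℕ} (U : Finset (Fin n)) (s : ℕ) (E : ℝ) (T t : ℕ)
    (DD : Finset (Fin n) → Finset (Fin n))
    (hDD : ∀ S : Finset (Fin n), S.card ≤ T → S ⊆ DD S ∧ (DD S).card = T)
    (hT : T ≤ n) (ht : t < T) :
    ∑ ω : Fin m → (Fin k ↪ Fin n), FF s E ω (DD (proc U s ω t)) =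
    ∑ ω : Fin m → (Fin k ↪ Fin n), FF s E ω (DD (proc U s ω (t+1))) := by
  classical
  have hP : ∀ S S' : Finset (Fin n), ∃ π : Equiv.Perm (Fin n), S ⊆ S' → S.card ≤ T → S'.card ≤ T →
      (∀ x, π x ∈ DD S' ↔ x ∈ DD S) ∧ ∀ x ∈ S, π x = x := by
    intro S S'
    by_cases hS : S ⊆ S' ∧ S.card ≤ T ∧ S'.card ≤ T
    · obtain ⟨h1, h2, h3⟩ := hS
      obtain ⟨π, h4, h5⟩ := exists_perm _ (DD S) (DD S') (by rw [(hDD S h2).2, (hDD S' h3).2]) rfl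
      refine ⟨π, fun _ _ _ => ⟨h4, fun x hx => h5 x ?_⟩⟩
      exact Finset.mem_inter.2 ⟨(hDD S h2).1 hx, (hDD S' h3).1 (h1 hx)⟩
    · exact ⟨1, fun h1 h2 h3 => absurd ⟨h1, h2, h3⟩ hS⟩
  choose P hP using hP
  have hP' : ∀ ω : Fin m → (Fin k ↪ Fin n), _ := fun ω =>
    hP (proc U s ω t) (proc U s ω (t+1)) (subset_stepD _ _)
      (by rw [card_proc _ _ _ _ (by omega)]; omega) (by rw [card_proc _ _ _ _ (by omega)]; omega)
  let Φ : (Fin m → (Fin k ↪ Fin n)) → (Fin m → (Fin k ↪ Fin n)) := fun ω a =>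
    if s ≤ hit (ω a) (proc U s ω t) then ω a
    else (ω a).trans (P (proc U s ω t) (proc U s ω (t+1))).toEmbedding
  have hΦ : ∀ ω, ∀ t' ≤ t+1, proc U s (Φ ω) t' = proc U s ω t' := fun ω =>
    proc_inv U s ω (Φ ω) t _ (hP' ω).2 (fun a => rfl)
  have hhit : ∀ ω a, hit (Φ ω a) (proc U s ω t) = hit (ω a) (proc U s ω t) := by
    intro ω a
    simp only [Φ]
    split_ifs with hc
    · rfl
    · unfold hit
      congr 1
      ext j
      simp only [Finset.mem_filter, Finset.mem_univ, true_and, Function.Embedding.trans_apply,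
        Equiv.coe_toEmbedding]
      constructor
      · intro hj
        have h1 := (hP' ω).2 _ hj
        rw [Equiv.injective _ h1] at hj
        exact hj
      · intro hj
        rw [(hP' ω).2 _ hj]; exact hj
  have hinj : Function.Injective Φ := by
    intro ω ω' h
    have h1 : proc U s ω t = proc U s ω' t := by
      rw [← hΦ ω t (by omega), ← hΦ ω' t (by omega), h]
    have h2 : proc U s ω (t+1) = proc U s ω' (t+1) := by
      rw [← hΦ ω (t+1) le_rfl, ← hΦ ω' (t+1) le_rfl, h]
    funext a
    have h3 : hit (ω a) (proc U s ω t) = hit (ω' a) (proc U s ω' t) := by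
      rw [← hhit ω, ← hhit ω', h, h1]
    have h4 : Φ ω a = Φ ω' a := by rw [h]
    simp only [Φ] at h4
    rw [h3, h1, h2] at h4
    split_ifs at h4 with hc
    · exact h4
    · ext j
      have := DFunLike.congr_fun h4 j
      simp only [Function.Embedding.trans_apply, Equiv.coe_toEmbedding] at this
      rw [Equiv.injective _ this]
  have hbij : Function.Bijective Φ := Finite.injective_iff_bijective.1 hinj
  refine Fintype.sum_bijective Φ hbij _ _ ?_
  intro ω
  unfold FF
  apply Finset.prod_congr rfl
  intro a _
  rw [hΦ ω (t+1) le_rfl]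
  have c1 := (hDD (proc U s ω t) (by rw [card_proc _ _ _ _ (by omega)]; omega)).1
  have c2 := (hDD (proc U s ω (t+1)) (by rw [card_proc _ _ _ _ (by omega)]; omega)).1
  have c3 : proc U s ω t ⊆ proc U s ω (t+1) := subset_stepD _ _
  by_cases hc : s ≤ hit (ω a) (proc U s ω t)
  · have hΦa : Φ ω a = ω a := if_pos hc
    rw [hΦa, if_pos (hc.trans (hit_mono _ c1)), if_pos (hc.trans (hit_mono _ (c3.trans c2)))]
  · have hΦa : Φ ω a = (ω a).trans (P (proc U s ω t) (proc U s ω (t+1))).toEmbedding := if_neg hc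
    rw [hΦa]
    have : hit ((ω a).trans (P (proc U s ω t) (proc U s ω (t+1))).toEmbedding)
      (DD (proc U s ω (t+1))) = hit (ω a) (DD (proc U s ω t)) := by
      unfold hit
      congr 1
      ext j
      simp only [Finset.mem_filter, Finset.mem_univ, true_and, Function.Embedding.trans_apply,
        Equiv.coe_toEmbedding]
      exact (hP' ω).1 _
    rw [this]

lemma hybrid {n m k : ℕ} (U : Finset (Fin n)) (s : ℕ) (E : ℝ) (T : ℕ) (hT : T ≤ n) :
    ∃ D : Finset (Fin n), D.card = T ∧
    ∑ ω : Fin m → (Fin k ↪ Fin n), FF s E ω (proc U s ω T) =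
    ∑ ω : Fin m → (Fin k ↪ Fin n), FF s E ω D := by
  classical
  have : ∀ S : Finset (Fin n), ∃ D : Finset (Fin n), S.card ≤ T → S ⊆ D ∧ D.card = T := by
    intro S
    by_cases h : S.card ≤ T
    · obtain ⟨D, h1, h2⟩ := Finset.exists_superset_card_eq h (by simpa using hT)
      exact ⟨D, fun _ => ⟨h1, h2⟩⟩
    · exact ⟨∅, fun h' => absurd h' h⟩
  choose DD hDD using this
  have key : ∀ t ≤ T, ∑ ω : Fin m → (Fin k ↪ Fin n), FF s E ω (DD ∅) =
      ∑ ω : Fin m → (Fin k ↪ Fin n), FF s E ω (DD (proc U s ω t)) := by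
    intro t
    induction t with
    | zero => intro _; rfl
    | succ t ih =>
      intro h
      rw [ih (by omega)]
      exact hybrid_step U s E T t DD hDD hT (by omega)
  refine ⟨DD ∅, (hDD ∅ (by simp)).2, ?_⟩
  rw [key T le_rfl]
  apply Finset.sum_congr rfl
  intro ω _
  have hc := card_proc U s ω T hT
  have := hDD (proc U s ω T) hc.le
  rw [← Finset.eq_of_subset_of_card_le this.1 (by omega)]
lemma count_step {n k : ℕ} (D : Finset (Fin n)) (J : Finset (Fin k)) (j : Fin k) (hj : j ∉ J) :
    (Finset.univ.filter fun e : Fin k ↪ Fin n => ∀ i ∈ insert j J, e i ∈ D).card * n ≤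
    (Finset.univ.filter fun e : Fin k ↪ Fin n => ∀ i ∈ J, e i ∈ D).card * D.card := by
  classical
  have : (Finset.univ.filter fun e : Fin k ↪ Fin n => ∀ i ∈ insert j J, e i ∈ D).card * n =
    (Finset.univ.filter fun e : Fin k ↪ Fin n => ∀ i ∈ insert j J, e i ∈ D).card *
      (Finset.univ : Finset (Fin n)).card := by simp
  rw [this, ← Finset.card_product, ← Finset.card_product]
  apply Finset.card_le_card_of_injOn
    (fun p => (p.1.trans (Equiv.swap (p.1 j) p.2).toEmbedding, p.1 j))
  · rintro ⟨e, x⟩ he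
    simp only [Finset.coe_product, Set.mem_prod, Finset.mem_coe, Finset.mem_filter,
      Finset.mem_univ, true_and, and_true, Finset.mem_insert, forall_eq_or_imp] at he
    simp only [Finset.coe_product, Set.mem_prod, Finset.mem_coe, Finset.mem_filter,
      Finset.mem_univ, true_and, Function.Embedding.trans_apply, Equiv.coe_toEmbedding]
    refine ⟨fun i hi => ?_, he.1⟩
    have hij : i ≠ j := by rintro rfl; exact hj hi
    have hne : e i ≠ e j := fun h => hij (e.injective h)
    by_cases hx : e i = x
    · rw [hx, Equiv.swap_apply_right]; exact he.1
    · rw [Equiv.swap_apply_of_ne_of_ne hne hx]; exact he.2 i hi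
  · rintro ⟨e, x⟩ he ⟨e', x'⟩ he' h
    simp only [Prod.mk.injEq] at h
    obtain ⟨h1, h2⟩ := h
    have h3 := DFunLike.congr_fun h1 j
    simp only [Function.Embedding.trans_apply, Equiv.coe_toEmbedding, Equiv.swap_apply_left] at h3
    subst h3
    rw [h2] at h1
    congr 1
    ext i
    have := DFunLike.congr_fun h1 i
    simp only [Function.Embedding.trans_apply, Equiv.coe_toEmbedding] at this
    rw [Equiv.injective _ this]

lemma count_le {n k : ℕ} (D : Finset (Fin n)) (J : Finset (Fin k)) :
    (Finset.univ.filter fun e : Fin k ↪ Fin n => ∀ i ∈ J, e i ∈ D).card * n ^ J.card ≤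
    Fintype.card (Fin k ↪ Fin n) * D.card ^ J.card := by
  classical
  induction J using Finset.induction_on with
  | empty => simp
  | insert j J hj ih =>
    rw [Finset.card_insert_of_notMem hj, pow_succ, pow_succ]
    have := count_step D J j hj
    calc _ = ((Finset.univ.filter fun e : Fin k ↪ Fin n => ∀ i ∈ insert j J, e i ∈ D).card * n)
          * n ^ J.card := by ring
      _ ≤ _ := Nat.mul_le_mul_right _ this
      _ = ((Finset.univ.filter fun e : Fin k ↪ Fin n => ∀ i ∈ J, e i ∈ D).card * n ^ J.card)
          * D.card := by ring
      _ ≤ _ := Nat.mul_le_mul_right _ ih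
      _ = _ := by ring

lemma hit_count {n k : ℕ} (s : ℕ) (D : Finset (Fin n)) :
    (Finset.univ.filter fun e : Fin k ↪ Fin n => s ≤ hit e D).card * n ^ s ≤
    Fintype.card (Fin k ↪ Fin n) * (k.choose s * D.card ^ s) := by
  classical
  have hsub : (Finset.univ.filter fun e : Fin k ↪ Fin n => s ≤ hit e D) ⊆
      (Finset.powersetCard s (Finset.univ : Finset (Fin k))).biUnion
        fun J => Finset.univ.filter fun e : Fin k ↪ Fin n => ∀ i ∈ J, e i ∈ D := by
    intro e he
    simp only [Finset.mem_filter, Finset.mem_univ, true_and] at he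
    obtain ⟨J, h1, h2⟩ := Finset.exists_subset_card_eq he
    rw [Finset.mem_biUnion]
    refine ⟨J, by simp [Finset.mem_powersetCard, h2], ?_⟩
    simp only [Finset.mem_filter, Finset.mem_univ, true_and]
    intro i hi
    simpa using h1 hi
  calc _ ≤ (∑ J ∈ Finset.powersetCard s (Finset.univ : Finset (Fin k)),
        (Finset.univ.filter fun e : Fin k ↪ Fin n => ∀ i ∈ J, e i ∈ D).card) * n ^ s :=
        Nat.mul_le_mul_right _ ((Finset.card_le_card hsub).trans Finset.card_biUnion_le)
    _ = ∑ J ∈ Finset.powersetCard s (Finset.univ : Finset (Fin k)),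
        (Finset.univ.filter fun e : Fin k ↪ Fin n => ∀ i ∈ J, e i ∈ D).card * n ^ s :=
        Finset.sum_mul _ _ _
    _ ≤ ∑ J ∈ Finset.powersetCard s (Finset.univ : Finset (Fin k)),
        Fintype.card (Fin k ↪ Fin n) * D.card ^ s := by
        apply Finset.sum_le_sum
        intro J hJ
        have := count_le D J
        rw [(Finset.mem_powersetCard.1 hJ).2] at this
        exact this
    _ = _ := by
        rw [Finset.sum_const, Finset.card_powersetCard, Finset.card_univ, Fintype.card_fin,
          smul_eq_mul]
        ring

lemma FF_sum {n m k : ℕ} (hn : 0 < n) (s : ℕ) (E : ℝ) (hE : 1 ≤ E) (D : Finset (Fin n)) :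
    ∑ ω : Fin m → (Fin k ↪ Fin n), FF s E ω D ≤
    (Fintype.card (Fin m → (Fin k ↪ Fin n)) : ℝ) *
      Real.exp (m * ((E - 1) * (k.choose s * ((D.card : ℝ) / n) ^ s))) := by
  classical
  have h1 : ∑ ω : Fin m → (Fin k ↪ Fin n), FF s E ω D =
      (∑ e : Fin k ↪ Fin n, if s ≤ hit e D then E else 1) ^ m := by
    unfold FF
    rw [Fintype.sum_pow]
  have hn' : (0:ℝ) < n := by exact_mod_cast hn
  have h2 : ∑ e : Fin k ↪ Fin n, (if s ≤ hit e D then E else 1) =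
      (Fintype.card (Fin k ↪ Fin n) : ℝ) + (E - 1) *
        ((Finset.univ.filter fun e : Fin k ↪ Fin n => s ≤ hit e D).card : ℝ) := by
    have : ∀ e : Fin k ↪ Fin n, (if s ≤ hit e D then E else 1) =
        1 + (E - 1) * (if s ≤ hit e D then 1 else 0) := by
      intro e; split_ifs <;> ring
    simp_rw [this]
    rw [Finset.sum_add_distrib, ← Finset.mul_sum, Finset.sum_boole]
    simp
  have h3 : ((Finset.univ.filter fun e : Fin k ↪ Fin n => s ≤ hit e D).card : ℝ) ≤
      (Fintype.card (Fin k ↪ Fin n) : ℝ) * (k.choose s * ((D.card : ℝ) / n) ^ s) := by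
    have h := hit_count (n := n) (k := k) s D
    have h' : ((Finset.univ.filter fun e : Fin k ↪ Fin n => s ≤ hit e D).card : ℝ) * (n:ℝ) ^ s ≤
      (Fintype.card (Fin k ↪ Fin n) : ℝ) * (k.choose s * (D.card : ℝ) ^ s) := by exact_mod_cast h
    rw [div_pow, ← mul_div_assoc, ← mul_div_assoc, le_div_iff₀ (by positivity)]
    exact h'
  rw [h1, h2, Fintype.card_fun, Fintype.card_fin]
  push_cast
  rw [Real.exp_nat_mul, ← mul_pow]
  apply pow_le_pow_left₀
  · have : 0 ≤ E - 1 := by linarith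
    positivity
  · set M := (Fintype.card (Fin k ↪ Fin n) : ℝ)
    have hM : 0 ≤ M := by positivity
    have h4 := Real.add_one_le_exp ((E - 1) * (k.choose s * ((D.card : ℝ) / n) ^ s))
    calc _ ≤ M + (E - 1) * (M * (k.choose s * ((D.card : ℝ) / n) ^ s)) := by
          have : 0 ≤ E - 1 := by linarith
          gcongr
      _ = M * ((E - 1) * (k.choose s * ((D.card : ℝ) / n) ^ s) + 1) := by ring
      _ ≤ _ := by gcongr

lemma FF_eq {n m k : ℕ} (s : ℕ) (E : ℝ) (ω : Fin m → (Fin k ↪ Fin n)) (D : Finset (Fin n)) :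
    FF s E ω D = E ^ NN s ω D := by
  unfold FF NN
  rw [Finset.prod_ite]
  simp

/-- Tail bound for the bad event. -/
lemma bad_count {n m k : ℕ} (hn : 0 < n) (U : Finset (Fin n)) (s : ℕ) (hs : 1 ≤ s) (hsk : s ≤ k)
    (T : ℕ) (hT : T ≤ n) (lam : ℝ) (hlam : 0 ≤ lam) (P : (Fin m → (Fin k ↪ Fin n)) → Prop)
    [DecidablePred P]
    (hP : ∀ ω, ¬ P ω → ∀ S : Finset (Fin n), S.card < T → ¬ KK U s ω S ⊆ S) :
    ((Finset.univ.filter fun ω => ¬ P ω).card : ℝ) ≤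
    (Fintype.card (Fin m → (Fin k ↪ Fin n)) : ℝ) *
      Real.exp (m * ((Real.exp (((k:ℝ) - s) * lam) - 1) * (k.choose s * ((T : ℝ) / n) ^ s))
        - lam * ((T:ℝ) - U.card)) := by
  classical
  have hks : (0:ℝ) ≤ (k:ℝ) - s := by
    have : (s:ℝ) ≤ k := by exact_mod_cast hsk
    linarith
  set E := Real.exp (((k:ℝ) - s) * lam) with hE
  have hE1 : 1 ≤ E := Real.one_le_exp (by positivity)
  obtain ⟨D, hD, hDs⟩ := hybrid (m := m) (k := k) U s E T hT
  have h1 := FF_sum (m := m) (k := k) hn s E hE1 D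
  rw [← hDs, hD] at h1
  have h2 : ((Finset.univ.filter fun ω => ¬ P ω).card : ℝ) * Real.exp (lam * ((T:ℝ) - U.card)) ≤
      ∑ ω : Fin m → (Fin k ↪ Fin n), FF s E ω (proc U s ω T) := by
    rw [← nsmul_eq_mul]
    refine (Finset.card_nsmul_le_sum _ (fun ω => FF s E ω (proc U s ω T)) _ ?_).trans
      (Finset.sum_le_sum_of_subset_of_nonneg (Finset.subset_univ _) ?_)
    · intro ω hω
      simp only [Finset.mem_filter, Finset.mem_univ, true_and] at hω
      obtain ⟨h3, h4⟩ := proc_bound U s hs ω T (fun t ht => hP ω hω _ (by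
        rw [card_proc _ _ _ _ (by omega)]; exact ht))
      have h5 := Finset.card_le_card h3
      rw [card_proc _ _ _ _ hT] at h5
      have h6 : (T:ℝ) ≤ U.card + ((k:ℝ) - s) * NN s ω (proc U s ω T) := by
        rw [← Nat.cast_sub hsk]
        exact_mod_cast h5.trans h4
      rw [FF_eq, hE, ← Real.exp_nat_mul]
      apply Real.exp_le_exp.2
      nlinarith
    · intro ω _ _
      rw [FF_eq]
      positivity
  rw [Real.exp_sub, ← mul_div_assoc, le_div_iff₀ (Real.exp_pos _)]
  exact h2.trans h1

lemma constraint_sol {q k l w : ℕ} (hq : 2 ≤ q) (f : (Fin k → Fin q) → (Fin l → Fin q))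
    (hf : WiseIndep q k l w f) (x : Fin k → Fin q) (T : Finset (Fin k))
    (hT : T.card < w ∨ T = Finset.univ) :
    ∃ B : (Fin k → Fin q) → ℝ, (∀ z, 0 ≤ B z) ∧ ∑ z, B z = 1 ∧ (∀ z, B z ≠ 0 → f z = f x) ∧
      ∀ j c, (if j ∈ T then (if c = x j then (1:ℝ) else 0) else (q:ℝ)⁻¹) =
        ∑ z : Fin k → Fin q, if z j = c then B z else 0 := by
  classical
  rcases hT with hT | rfl
  · set A := Finset.univ.filter fun z : Fin k → Fin q => (∀ i ∈ T, z i = x i) ∧ f z = f x with hA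
    have hxA : x ∈ A := by simp [hA]
    have hApos : (0:ℝ) < A.card := by exact_mod_cast Finset.card_pos.2 ⟨x, hxA⟩
    have hsum : ∀ j c, (∑ z : Fin k → Fin q, if z j = c then
        (if z ∈ A then (A.card : ℝ)⁻¹ else 0) else 0) =
        ((A.filter fun z => z j = c).card : ℝ) * (A.card : ℝ)⁻¹ := by
      intro j c
      rw [← nsmul_eq_mul, ← Finset.sum_const, Finset.sum_filter, ← Finset.sum_filter,
        ← Finset.sum_filter, Finset.filter_filter, ← Finset.sum_filter]
      apply Finset.sum_congr _ (fun _ _ => rfl)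
      ext z
      simp [and_comm]
    refine ⟨fun z => if z ∈ A then (A.card : ℝ)⁻¹ else 0, ?_, ?_, ?_, ?_⟩
    · intro z
      dsimp only
      split_ifs <;> positivity
    · rw [← Finset.sum_filter]
      simp [hApos.ne']
    · intro z hz
      dsimp only at hz
      by_cases h : z ∈ A
      · simp only [hA, Finset.mem_filter] at h
        exact h.2.2
      · simp [h] at hz
    · intro j c
      rw [hsum]
      by_cases hj : j ∈ T
      · rw [if_pos hj]
        split_ifs with hc
        · have : (A.filter fun z => z j = c) = A := by
            rw [Finset.filter_eq_self]
            intro z hz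
            simp only [hA, Finset.mem_filter] at hz
            rw [hz.2.1 j hj, hc]
          rw [this, mul_inv_cancel₀ hApos.ne']
        · have : (A.filter fun z => z j = c) = ∅ := by
            rw [Finset.filter_eq_empty_iff]
            intro z hz
            simp only [hA, Finset.mem_filter] at hz
            rw [hz.2.1 j hj]
            exact fun h => hc h.symm
          simp [this]
      · rw [if_neg hj]
        have hcard : ∀ c, (A.filter fun z => z j = c).card = q ^ (k - (insert j T).card - l) := by
          intro c
          rw [← hf (insert j T) (by rw [Finset.card_insert_of_notMem hj]; omega)
            (Function.update x j c) (f x)]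
          congr 1
          ext z
          simp only [hA, Finset.mem_filter, Finset.mem_univ, true_and, Finset.mem_insert,
            forall_eq_or_imp, Function.update_self]
          have : (∀ i ∈ T, z i = Function.update x j c i) ↔ ∀ i ∈ T, z i = x i := by
            refine forall₂_congr fun i hi => ?_
            rw [Function.update_of_ne (by rintro rfl; exact hj hi)]
          rw [this]
          tauto
        have htot : A.card = q * q ^ (k - (insert j T).card - l) := by
          rw [Finset.card_eq_sum_card_fiberwise (f := fun z => z j) (t := Finset.univ)
            (fun _ _ => Finset.mem_coe.2 (Finset.mem_univ _))]
          rw [Finset.sum_congr rfl (fun c _ => hcard c)]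
          simp
        rw [hcard, htot]
        have hq0 : (q:ℝ) ≠ 0 := by
          have : q ≠ 0 := by omega
          exact_mod_cast this
        push_cast
        field_simp
  · refine ⟨fun z => if z = x then 1 else 0, ?_, by simp, ?_, ?_⟩
    · intro z
      dsimp only
      split_ifs <;> norm_num
    · intro z hz
      by_cases h : z = x
      · rw [h]
      · simp [h] at hz
    · intro j c
      have : ∀ z : Fin k → Fin q, (if z j = c then (if z = x then (1:ℝ) else 0) else 0) =
          if z = x then (if c = x j then 1 else 0) else 0 := by
        intro z
        by_cases h : z = x
        · subst h; simp [eq_comm]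
        · simp [h]
      simp [this]

lemma lp_point {n m k q l w : ℕ} (hq : 2 ≤ q) (f : Fin m → (Fin k → Fin q) → (Fin l → Fin q))
    (hf : ∀ a, WiseIndep q k l w (f a)) (xs : Fin n → Fin q) (ω : Fin m → (Fin k ↪ Fin n))
    (U S : Finset (Fin n)) (hS : KK U w ω S ⊆ S) :
    ∃ (b : Fin n → Fin q → ℝ) (B : Fin m → (Fin k → Fin q) → ℝ),
            MemLOCAL ω b B ∧
            (∀ i ∈ U, b i (xs i) = 1) ∧
            ZeroOptimal f (fun a => f a fun j => xs (ω a j)) B ∧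
            (integralPart b).card ≤ S.card := by
  classical
  have hsol := fun a => constraint_sol hq (f a) (hf a) (fun j => xs (ω a j))
    (Finset.univ.filter fun j => ω a j ∈ S) (by
      by_cases h : w ≤ hit (ω a) S
      · right
        rw [Finset.filter_eq_self]
        intro j _
        apply hS
        apply Finset.mem_union_right
        rw [Finset.mem_biUnion]
        exact ⟨a, by simp [h], by simp⟩
      · left
        unfold hit at h
        omega)
  choose B hB1 hB2 hB3 hB4 using hsol
  have hq1 : (q:ℝ)⁻¹ < 1 := by
    apply inv_lt_one_of_one_lt₀
    exact_mod_cast (by omega : 1 < q)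
  refine ⟨fun i c => if i ∈ S then (if c = xs i then 1 else 0) else (q:ℝ)⁻¹, B,
    ⟨?_, ?_, hB1, hB2, ?_⟩, ?_, hB3, ?_⟩
  · intro i c
    dsimp only
    split_ifs <;> positivity
  · intro i
    by_cases h : i ∈ S
    · simp [h]
    · have hq0 : (q:ℝ) ≠ 0 := by
        have : q ≠ 0 := by omega
        exact_mod_cast this
      simp [h, hq0]
  · intro a j c
    rw [← hB4 a j c]
    simp
  · intro i hi
    have : i ∈ S := hS (Finset.mem_union_left _ hi)
    simp [this]
  · apply Finset.card_le_card
    intro i hi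
    unfold integralPart at hi
    simp only [Finset.mem_filter, Finset.mem_univ, true_and] at hi
    by_contra h
    simp only [h, if_false] at hi
    obtain ⟨_, h2⟩ := hi
    linarith

lemma muc_key (k r : ℕ) (hr : 3 ≤ r) (hrk : r ≤ k) :
    ((k:ℝ) - (r - 1 : ℕ)) * (muc k r * (k.choose (r - 1)) * (1 + 1 / ((r:ℝ) - 2)) ^ (r - 1))
      = 1 / ((r:ℝ) - 2) := by
  obtain ⟨p, rfl⟩ : ∃ p, r = p + 3 := ⟨r - 3, by omega⟩
  have h := Nat.choose_succ_right_eq k (p + 2)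
  have h' : (k.choose (p + 3) : ℝ) * (p + 3) = k.choose (p + 2) * ((k:ℝ) - (p + 2)) := by
    have h2 : ((k - (p+2) : ℕ) : ℝ) = (k:ℝ) - (p + 2) := by
      rw [Nat.cast_sub (by omega)]; push_cast; ring
    rw [← h2]
    exact_mod_cast h
  have hc : (0:ℝ) < k.choose (p + 3) := by exact_mod_cast Nat.choose_pos hrk
  unfold muc
  have e1 : p + 3 - 1 = p + 2 := rfl
  have e2 : p + 3 - 2 = p + 1 := rfl
  rw [e1, e2]
  push_cast
  have e3 : (p:ℝ) + 3 - 2 = p + 1 := by ring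
  have e4 : (p:ℝ) + 3 - 1 = p + 2 := by ring
  rw [e3, e4]
  have e5 : 1 + 1 / ((p:ℝ) + 1) = (p + 2) / (p + 1) := by field_simp; ring
  rw [e5, div_pow]
  have hp1 : (p:ℝ) + 1 ≠ 0 := by positivity
  have hp2 : (p:ℝ) + 2 ≠ 0 := by positivity
  have hp3 : (p:ℝ) + 3 ≠ 0 := by positivity
  calc _ = (k.choose (p + 2) * ((k:ℝ) - (p + 2))) * ((k.choose (p + 3) : ℝ)⁻¹ * (((p:ℝ) + 1) ^ (p + 1) / ((p + 3) * ((p:ℝ) + 2) ^ (p + 2)))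
        * (((p:ℝ) + 2) ^ (p + 2) / ((p:ℝ) + 1) ^ (p + 2))) := by ring
    _ = 1 / ((p:ℝ) + 1) := by
      rw [← h']
      field_simp
      ring

lemma muc_pos (k r : ℕ) (hr : 3 ≤ r) (hrk : r ≤ k) : 0 < muc k r := by
  have hc : (0:ℝ) < k.choose r := by exact_mod_cast Nat.choose_pos hrk
  have h3 : (3:ℝ) ≤ r := by exact_mod_cast hr
  have h1 : (0:ℝ) < (r:ℝ) - 1 := by linarith
  have h2 : (0:ℝ) < (r:ℝ) - 2 := by linarith
  unfold muc
  positivity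

lemma exists_lam (d A τ : ℝ) (hd : 0 < d) (hA : 0 ≤ A) (h : d * A < τ) :
    ∃ lam > 0, A * (Real.exp (d * lam) - 1) - lam * τ < 0 := by
  set δ := τ - d * A with hδ
  have hδ0 : 0 < δ := by linarith
  set lam := min (1 / d) (δ / (2 * (d ^ 2 * A + 1))) with hlam
  have h0 : 0 < lam := by rw [hlam]; apply lt_min <;> positivity
  have h1 : d * lam ≤ 1 := by
    have : lam ≤ 1 / d := min_le_left _ _
    rw [le_div_iff₀ hd] at this
    linarith
  have h2 : lam * (2 * (d ^ 2 * A + 1)) ≤ δ := by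
    have : lam ≤ δ / (2 * (d ^ 2 * A + 1)) := min_le_right _ _
    rwa [le_div_iff₀ (by positivity)] at this
  have h3 : Real.exp (d * lam) - 1 ≤ d * lam + (d * lam) ^ 2 := by
    have hx : 0 < d * lam := by positivity
    have := Real.abs_exp_sub_one_sub_id_le (x := d * lam) (by rw [abs_of_pos hx]; exact h1)
    have := (abs_le.1 this).2
    linarith
  refine ⟨lam, h0, ?_⟩
  have h4 := mul_le_mul_of_nonneg_left h3 hA
  have h5 : d ^ 2 * A * lam < δ := by nlinarith [mul_nonneg (mul_nonneg (sq_nonneg d) hA) h0.le]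
  have h6 := mul_lt_mul_of_pos_left h5 h0
  have h7 : lam * τ = lam * (δ + d * A) := by rw [hδ]; ring
  nlinarith

set_option maxHeartbeats 2000000 in
/-- Theorem 1 / `thm:main0`: for `(r-1)`-wise independent local functions
and `m = ⌈μ n^{r-1}/u(n)^{r-2}⌉` with `μ < μ_c(k,r)`, with probability `≥ 1 - exp(-c u(n))`
the LP over LOCAL (with the first `u(n)` variables fixed to the planted values) has a
zero-optimal point whose integral part has size `< (1 + 1/(r-2)) u(n)`. -/
theorem stmt0 (k r q l : ℕ) (hr : 3 ≤ r) (hrk : r ≤ k) (hq : 2 ≤ q)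
    (hl1 : 1 ≤ l) (hlk : l ≤ k - 1)
    (u : ℕ → ℕ) (hu : UGood u)
    (μ : ℝ) (hμ : μ < muc k r)
    (m : ℕ → ℕ) (hm : ∀ n, m n = ⌈μ * (n : ℝ) ^ (r - 1) / (u n : ℝ) ^ (r - 2)⌉₊)
    (f : (n : ℕ) → Fin (m n) → (Fin k → Fin q) → (Fin l → Fin q))
    (hf : ∀ n a, WiseIndep q k l (r - 1) (f n a))
    (xs : (n : ℕ) → Fin n → Fin q) :
    ∃ c > (0 : ℝ), ∀ᶠ n in atTop,
      1 - Real.exp (-c * u n) ≤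
        prG n (m n) k (fun ω : Fin (m n) → (Fin k ↪ Fin n) =>
          ∃ (b : Fin n → Fin q → ℝ) (B : Fin (m n) → (Fin k → Fin q) → ℝ),
            MemLOCAL ω b B ∧
            (∀ i : Fin n, (i : ℕ) < u n → b i (xs n i) = 1) ∧
            ZeroOptimal (f n) (fun a => f n a fun j => xs n (ω a j)) B ∧
            ((integralPart b).card : ℝ) < (1 + 1 / ((r : ℝ) - 2)) * u n) := by
  classical
  have hr3 : (3:ℝ) ≤ r := by exact_mod_cast hr
  set τ : ℝ := 1 / ((r:ℝ) - 2) with hτ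
  have hτ0 : 0 < τ := by rw [hτ]; apply one_div_pos.2; linarith
  set d : ℝ := (k:ℝ) - (r - 1 : ℕ) with hd
  have hd0 : 0 < d := by
    have : ((r - 1 : ℕ) : ℝ) < k := by exact_mod_cast (by omega : r - 1 < k)
    rw [hd]; linarith
  set Cb : ℝ := (k.choose (r - 1) : ℝ) with hCb
  have hCb0 : 0 < Cb := by
    rw [hCb]; exact_mod_cast Nat.choose_pos (by omega)
  set μ0 : ℝ := max μ 0 with hμ0
  have hμ0n : 0 ≤ μ0 := le_max_right _ _
  have hμ0lt : μ0 < muc k r := max_lt hμ (muc_pos k r hr hrk)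
  have hkey := muc_key k r hr hrk
  rw [← hτ, ← hd, ← hCb] at hkey
  have hlt : d * (μ0 * Cb * (1 + τ) ^ (r - 1)) < τ := by
    calc _ < d * (muc k r * Cb * (1 + τ) ^ (r - 1)) := by gcongr
      _ = τ := hkey
  obtain ⟨ε, hε0, hε⟩ : ∃ ε > 0, d * ((μ0 + ε) * Cb * (1 + τ + ε) ^ (r - 1)) < τ := by
    have hcont : Continuous fun ε : ℝ => d * ((μ0 + ε) * Cb * (1 + τ + ε) ^ (r - 1)) := by fun_prop
    have h1 : ∀ᶠ ε in nhds (0:ℝ), d * ((μ0 + ε) * Cb * (1 + τ + ε) ^ (r - 1)) < τ := by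
      apply hcont.continuousAt.eventually_lt continuousAt_const
      simpa using hlt
    have h2 : ∀ᶠ ε in nhdsWithin (0:ℝ) (Set.Ioi 0), d * ((μ0 + ε) * Cb * (1 + τ + ε) ^ (r - 1)) < τ :=
      h1.filter_mono nhdsWithin_le_nhds
    obtain ⟨ε, h3, h4⟩ := (h2.and self_mem_nhdsWithin).exists
    exact ⟨ε, h4, h3⟩
  set A : ℝ := (μ0 + ε) * Cb * (1 + τ + ε) ^ (r - 1) with hA
  have hA0 : 0 ≤ A := by positivity
  obtain ⟨lam, hlam0, hlam⟩ := exists_lam d A τ hd0 hA0 hε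
  refine ⟨-(A * (Real.exp (d * lam) - 1) - lam * τ), by linarith, ?_⟩
  have ev1 : ∀ᶠ n in atTop, max 1 (1 / ε) ≤ (u n : ℝ) := hu.1.eventually_ge_atTop _
  have ev2 : ∀ᶠ n in atTop, (u n : ℝ) / n < 1 / (1 + τ + ε) :=
    hu.2.eventually_lt_const (by positivity)
  have ev3 : ∀ᶠ n : ℕ in atTop, 1 / ε ≤ (n : ℝ) :=
    tendsto_natCast_atTop_atTop.eventually_ge_atTop _
  filter_upwards [ev1, ev2, ev3, eventually_ge_atTop k] with n h1 h2 h3 h4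
  have hn : 0 < n := by omega
  have hn' : (0:ℝ) < n := by exact_mod_cast hn
  have hu1 : (1:ℝ) ≤ u n := (le_max_left _ _).trans h1
  have hu0 : (0:ℝ) < u n := by linarith
  have hue : 1 ≤ ε * u n := by
    have := (le_max_right _ _).trans h1
    rw [div_le_iff₀ hε0] at this
    linarith
  have hne : 1 ≤ ε * n := by
    rw [div_le_iff₀ hε0] at h3
    linarith
  have hun : (1 + τ + ε) * u n ≤ n := by
    rw [div_lt_div_iff₀ hn' (by positivity)] at h2
    linarith
  have hun' : (u n : ℝ) ≤ n := by nlinarith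
  set T : ℕ := ⌈(1 + τ) * (u n : ℝ)⌉₊ with hT
  have hT1 : (1 + τ) * (u n : ℝ) ≤ T := Nat.le_ceil _
  have hT2 : (T : ℝ) ≤ (1 + τ + ε) * u n := by
    have := Nat.ceil_lt_add_one (a := (1 + τ) * (u n : ℝ)) (by positivity)
    rw [← hT] at this
    nlinarith
  have hTn : T ≤ n := by exact_mod_cast hT2.trans hun
  have hr12 : r - 1 = (r - 2) + 1 := by omega
  have hm' : (m n : ℝ) ≤ (μ0 + ε) * (n:ℝ) ^ (r - 1) / (u n : ℝ) ^ (r - 2) := by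
    have ha : m n ≤ ⌈μ0 * (n:ℝ) ^ (r - 1) / (u n : ℝ) ^ (r - 2)⌉₊ := by
      rw [hm n]
      apply Nat.ceil_mono
      have : μ ≤ μ0 := le_max_left _ _
      gcongr
    have hb := Nat.ceil_lt_add_one (a := μ0 * (n:ℝ) ^ (r - 1) / (u n : ℝ) ^ (r - 2)) (by positivity)
    have hc : (m n : ℝ) ≤ μ0 * (n:ℝ) ^ (r - 1) / (u n : ℝ) ^ (r - 2) + 1 :=
      le_trans (by exact_mod_cast ha) hb.le
    have hd : 1 ≤ ε * (n:ℝ) ^ (r - 1) / (u n : ℝ) ^ (r - 2) := by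
      rw [le_div_iff₀ (by positivity), one_mul, hr12, pow_succ]
      have : (u n : ℝ) ^ (r - 2) ≤ (n:ℝ) ^ (r - 2) := by gcongr
      have h5 : (0:ℝ) ≤ (n:ℝ) ^ (r - 2) := by positivity
      nlinarith
    rw [add_mul, add_div]
    linarith
  set U : Finset (Fin n) := Finset.univ.filter fun i : Fin n => (i : ℕ) < u n with hU
  have hUc : (U.card : ℝ) ≤ u n := by
    have : U.card ≤ (Finset.range (u n)).card := by
      apply Finset.card_le_card_of_injOn (fun i : Fin n => (i : ℕ))
      · intro i hi
        simpa [hU] using hi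
      · intro i _ j _ h
        exact Fin.ext h
    rw [Finset.card_range] at this
    exact_mod_cast this
  set P : (Fin (m n) → (Fin k ↪ Fin n)) → Prop := fun ω =>
          ∃ (b : Fin n → Fin q → ℝ) (B : Fin (m n) → (Fin k → Fin q) → ℝ),
            MemLOCAL ω b B ∧
            (∀ i : Fin n, (i : ℕ) < u n → b i (xs n i) = 1) ∧
            ZeroOptimal (f n) (fun a => f n a fun j => xs n (ω a j)) B ∧
            ((integralPart b).card : ℝ) < (1 + τ) * u n with hP
  have hPS : ∀ ω, ¬ P ω → ∀ S : Finset (Fin n), S.card < T → ¬ KK U (r - 1) ω S ⊆ S := by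
    intro ω hω S hST hS
    apply hω
    obtain ⟨b, B, g1, g2, g3, g4⟩ := lp_point hq (f n) (hf n) (xs n) ω U S hS
    refine ⟨b, B, g1, fun i hi => g2 i (by simp [hU, hi]), g3, ?_⟩
    have : (S.card : ℝ) < (1 + τ) * u n := Nat.lt_ceil.1 hST
    exact lt_of_le_of_lt (by exact_mod_cast g4) this
  have hbad := bad_count (m := m n) (k := k) hn U (r - 1) (by omega) (by omega) T hTn lam hlam0.le P hPS
  rw [← hd, ← hCb] at hbad
  set M : ℝ := (Fintype.card (Fin (m n) → (Fin k ↪ Fin n)) : ℝ) with hM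
  have hM0 : 0 < M := by
    have : Nonempty (Fin k ↪ Fin n) := ⟨Fin.castLEEmb h4⟩
    rw [hM]
    exact_mod_cast Fintype.card_pos
  have hE0 : 0 ≤ Real.exp (d * lam) - 1 := by
    have := Real.one_le_exp (x := d * lam) (by positivity)
    linarith
  have hexp : (m n : ℝ) * ((Real.exp (d * lam) - 1) * (Cb * ((T : ℝ) / n) ^ (r - 1)))
        - lam * ((T:ℝ) - U.card) ≤ (A * (Real.exp (d * lam) - 1) - lam * τ) * u n := by
    have g1 : (m n : ℝ) * ((Real.exp (d * lam) - 1) * (Cb * ((T : ℝ) / n) ^ (r - 1))) ≤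
        ((μ0 + ε) * (n:ℝ) ^ (r - 1) / (u n : ℝ) ^ (r - 2)) *
        ((Real.exp (d * lam) - 1) * (Cb * (((1 + τ + ε) * u n) / n) ^ (r - 1))) := by
      gcongr
    have g2 : ((μ0 + ε) * (n:ℝ) ^ (r - 1) / (u n : ℝ) ^ (r - 2)) *
        ((Real.exp (d * lam) - 1) * (Cb * (((1 + τ + ε) * u n) / n) ^ (r - 1))) =
        A * (Real.exp (d * lam) - 1) * u n := by
      rw [hA, div_pow, mul_pow]
      have : (u n : ℝ) ^ (r - 1) = (u n : ℝ) ^ (r - 2) * u n := by rw [hr12, pow_succ]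
      rw [this]
      have : (u n : ℝ) ^ (r - 2) ≠ 0 := by positivity
      have : (n : ℝ) ^ (r - 1) ≠ 0 := by positivity
      field_simp
    have g3 : lam * (τ * u n) ≤ lam * ((T:ℝ) - U.card) := by
      apply mul_le_mul_of_nonneg_left _ hlam0.le
      linarith
    linarith
  have hbad2 : ((Finset.univ.filter fun ω => ¬ P ω).card : ℝ) ≤
      M * Real.exp ((A * (Real.exp (d * lam) - 1) - lam * τ) * u n) :=
    hbad.trans (by gcongr)
  have hcompl : ((Finset.univ.filter P).card : ℝ) + ((Finset.univ.filter fun ω => ¬ P ω).card : ℝ)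
      = M := by
    rw [hM]
    have := Finset.card_filter_add_card_filter_not (s := (Finset.univ : Finset (Fin (m n) → (Fin k ↪ Fin n)))) P
    rw [Finset.card_univ] at this
    exact_mod_cast this
  have hpr : prG n (m n) k P = ((Finset.univ.filter P).card : ℝ) / M := by
    unfold prG
    rw [hM]
  rw [hpr, le_div_iff₀ hM0, neg_neg]
  linarith
end
end

section
/- Fix integers k ≥ r ≥ 3 and an alphabet size q ≥ 2, and for each n local functions f_1,…,f_m : [q]^k → [q]^{k−r+1} that all have MDS inverse image of dimension r−1. Let u ∈ ω(1) ∩ o(n), let μ > μ_c(k,r) be a constant, and set m = ⌈μ·n^{r−1}/u(n)^{r−2}⌉. Generate the bipartite graph from the random ensemble, let x* ∈ [q]^n be a planted assignment, set y_a = f_a(x*|_{∂(a)}) for each a, and consider the local marginal polytope LOCAL for these constraints with the additional requirement that b_i(x*_i) = 1 for i = 1,…,u(n). Then there exist α ∈ (0,1) and c > 0 such that, for all sufficiently large n, with probability at least 1 − exp(−c·u(n)) every zero-optimal point of LOCAL has integral part of size at least (1−α)n; in particular the LP relaxation determines linearly many input variables. -/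
open Filter Finset Asymptotics

noncomputable section

/-! ### Closures -/

section Closure

variable {n m : ℕ}

/-- a constraint with neighbourhood `S` is satisfied by determined set `W` -/
def OkC (r : ℕ) (W S : Finset (Fin n)) : Prop := r - 1 ≤ (S ∩ W).card → S ⊆ W

/-- `W` is closed under propagation. -/
def ClosedS (r : ℕ) (σ : Fin m → Finset (Fin n)) (W : Finset (Fin n)) : Prop :=
  ∀ a, OkC r W (σ a)

open Classical in
/-- closure of `U`. -/
def clo (r : ℕ) (U : Finset (Fin n)) (σ : Fin m → Finset (Fin n)) : Finset (Fin n) :=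
  Finset.univ.filter fun i => ∀ W, U ⊆ W → ClosedS r σ W → i ∈ W

/-- pattern of a constraint relative to `W`. -/
def pat (W S : Finset (Fin n)) : Finset (Fin n) := if S ⊆ W then S else ∅

/-- number of nonempty patterns -/
def Jn (π : Fin m → Finset (Fin n)) : ℕ := (Finset.univ.filter fun a => π a ≠ ∅).card

lemma clo_min {r : ℕ} {U : Finset (Fin n)} {σ : Fin m → Finset (Fin n)} {W : Finset (Fin n)}
    (h1 : U ⊆ W) (h2 : ClosedS r σ W) : clo r U σ ⊆ W := by
  intro i hi
  simp only [clo, Finset.mem_filter] at hi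
  exact hi.2 W h1 h2

lemma subset_clo {r : ℕ} {U : Finset (Fin n)} {σ : Fin m → Finset (Fin n)} :
    U ⊆ clo r U σ := by
  intro i hi
  simp only [clo, Finset.mem_filter, Finset.mem_univ, true_and]
  intro W h _
  exact h hi

lemma closed_clo {r : ℕ} {U : Finset (Fin n)} {σ : Fin m → Finset (Fin n)} :
    ClosedS r σ (clo r U σ) := by
  intro a h i hi
  simp only [clo, Finset.mem_filter, Finset.mem_univ, true_and]
  intro W h1 h2
  refine h2 a (h.trans (Finset.card_le_card ?_)) hi
  exact Finset.inter_subset_inter_left (clo_min h1 h2)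

lemma clo_eq_iff {r : ℕ} {U : Finset (Fin n)} {σ : Fin m → Finset (Fin n)}
    {W : Finset (Fin n)} :
    clo r U σ = W ↔ ClosedS r σ W ∧ clo r U (fun a => pat W (σ a)) = W := by
  have hpatclosed : ∀ W', ClosedS r σ W' → ClosedS r (fun a => pat W (σ a)) W' := by
    intro W' h a
    unfold pat
    by_cases hs : σ a ⊆ W
    · simpa [hs] using h a
    · simp [hs, OkC]
  constructor
  · intro h
    have hc : ClosedS r σ W := h ▸ closed_clo
    have hUW : U ⊆ W := h ▸ subset_clo
    refine ⟨hc, ?_⟩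
    have hsub : clo r U (fun a => pat W (σ a)) ⊆ W := clo_min hUW (hpatclosed W hc)
    refine Finset.Subset.antisymm hsub ?_
    have : ClosedS r σ (clo r U (fun a => pat W (σ a))) := by
      intro a ha
      have h1 : σ a ⊆ W :=
        hc a (ha.trans (Finset.card_le_card (Finset.inter_subset_inter_left hsub)))
      have h2 := closed_clo (r := r) (U := U) (σ := fun a => pat W (σ a)) a
      simp only [pat, h1, if_true] at h2
      exact h2 ha
    calc W = clo r U σ := h.symm
      _ ⊆ _ := clo_min subset_clo this
  · rintro ⟨hc, h⟩
    have hUW : U ⊆ W := by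
      have := subset_clo (r := r) (U := U) (σ := fun a => pat W (σ a))
      rwa [h] at this
    refine Finset.Subset.antisymm (clo_min hUW hc) ?_
    calc W = _ := h.symm
      _ ⊆ _ := clo_min subset_clo (hpatclosed _ closed_clo)

open Classical in
/-- pattern weight -/
def qw (r : ℕ) (W : Finset (Fin n)) (ν : Finset (Fin n) → ℝ) (S : Finset (Fin n)) : ℝ :=
  ∑ S' ∈ Finset.univ.filter (fun S' => OkC r W S' ∧ pat W S' = S), ν S'

open Classical in
lemma sum_pattern (r : ℕ) (W : Finset (Fin n)) (ν : Finset (Fin n) → ℝ)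
    (G : (Fin m → Finset (Fin n)) → Prop) :
    ∑ σ ∈ Finset.univ.filter (fun σ : Fin m → Finset (Fin n) =>
        ClosedS r σ W ∧ G (fun a => pat W (σ a))), ∏ a, ν (σ a)
      = ∑ π ∈ Finset.univ.filter G, ∏ a, qw r W ν (π a) := by
  unfold qw
  simp_rw [Finset.prod_univ_sum]
  rw [← Finset.sum_fiberwise_of_maps_to (t := Finset.univ.filter G)
    (g := fun σ : Fin m → Finset (Fin n) => fun a => pat W (σ a))]
  · refine Finset.sum_congr rfl fun π hπ => ?_
    refine Finset.sum_congr ?_ fun _ _ => rfl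
    ext σ
    simp only [Finset.mem_filter, Finset.mem_univ, true_and, Fintype.mem_piFinset] at hπ ⊢
    constructor
    · rintro ⟨⟨h1, _⟩, h2⟩ a
      exact ⟨h1 a, congrFun h2 a⟩
    · intro h
      have h2 : (fun a => pat W (σ a)) = π := funext fun a => (h a).2
      exact ⟨⟨fun a => (h a).1, h2 ▸ hπ⟩, h2⟩
  · intro σ hσ
    simp only [Finset.mem_filter, Finset.mem_univ, true_and] at hσ ⊢
    exact hσ.2

open Classical in
lemma tilt (r : ℕ) (U W : Finset (Fin n)) (ν ν' : Finset (Fin n) → ℝ)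
    (hν : ∀ S, 0 ≤ ν S) (hν' : ∀ S, 0 ≤ ν' S) (C ρ : ℝ) (hC : 1 ≤ C) (hρ0 : 0 ≤ ρ) (hρ1 : ρ ≤ 1)
    (h1 : ∀ S, S ≠ ∅ → qw r W ν S ≤ C * qw r W ν' S)
    (h2 : qw r W ν ∅ ≤ ρ * qw r W ν' ∅) (j : ℕ) :
    ∑ σ ∈ Finset.univ.filter (fun σ : Fin m → Finset (Fin n) =>
        clo r U σ = W ∧ Jn (fun a => pat W (σ a)) ≤ j), ∏ a, ν (σ a)
      ≤ C ^ j * ρ ^ (m - j) * ∑ σ ∈ Finset.univ.filter (fun σ : Fin m → Finset (Fin n) =>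
        clo r U σ = W), ∏ a, ν' (σ a) := by
  have hq : ∀ S, 0 ≤ qw r W ν S := fun S => Finset.sum_nonneg fun _ _ => hν _
  have hq' : ∀ S, 0 ≤ qw r W ν' S := fun S => Finset.sum_nonneg fun _ _ => hν' _
  have e1 := sum_pattern r W ν (fun π : Fin m → Finset (Fin n) => clo r U π = W ∧ Jn π ≤ j)
  have e2 := sum_pattern r W ν' (fun π : Fin m → Finset (Fin n) => clo r U π = W)
  have f1 : (Finset.univ.filter (fun σ : Fin m → Finset (Fin n) =>
        clo r U σ = W ∧ Jn (fun a => pat W (σ a)) ≤ j)) =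
      Finset.univ.filter (fun σ : Fin m → Finset (Fin n) =>
        ClosedS r σ W ∧ (clo r U (fun a => pat W (σ a)) = W ∧ Jn (fun a => pat W (σ a)) ≤ j)) := by
    ext σ
    simp only [Finset.mem_filter, Finset.mem_univ, true_and]
    rw [clo_eq_iff, and_assoc]
  have f2 : (Finset.univ.filter (fun σ : Fin m → Finset (Fin n) => clo r U σ = W)) =
      Finset.univ.filter (fun σ : Fin m → Finset (Fin n) =>
        ClosedS r σ W ∧ clo r U (fun a => pat W (σ a)) = W) := by
    ext σ
    simp only [Finset.mem_filter, Finset.mem_univ, true_and]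
    rw [clo_eq_iff]
  have e1' : ∑ σ ∈ Finset.univ.filter (fun σ : Fin m → Finset (Fin n) =>
        clo r U σ = W ∧ Jn (fun a => pat W (σ a)) ≤ j), ∏ a, ν (σ a) =
      ∑ π ∈ Finset.univ.filter (fun π : Fin m → Finset (Fin n) => clo r U π = W ∧ Jn π ≤ j),
        ∏ a, qw r W ν (π a) := by
    rw [f1]; convert e1
  have e2' : ∑ σ ∈ Finset.univ.filter (fun σ : Fin m → Finset (Fin n) =>
        clo r U σ = W), ∏ a, ν' (σ a) =
      ∑ π ∈ Finset.univ.filter (fun π : Fin m → Finset (Fin n) => clo r U π = W),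
        ∏ a, qw r W ν' (π a) := by
    rw [f2]; convert e2; exact clo_eq_iff.symm
  rw [e1', e2', Finset.mul_sum]
  refine (Finset.sum_le_sum (g := fun π => C ^ j * ρ ^ (m - j) * ∏ a, qw r W ν' (π a)) ?_).trans ?_
  · intro π hπ
    simp only [Finset.mem_filter, Finset.mem_univ, true_and] at hπ
    have hcard : (Finset.univ.filter fun a => ¬ (π a ≠ ∅)).card + Jn π = m := by
      have := Finset.card_filter_add_card_filter_not (s := (Finset.univ : Finset (Fin m)))
        (fun a => π a ≠ ∅)
      simp only [Finset.card_univ, Fintype.card_fin] at this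
      unfold Jn
      omega
    calc ∏ a, qw r W ν (π a)
        ≤ ∏ a, ((if π a ≠ ∅ then C else ρ) * qw r W ν' (π a)) := by
          refine Finset.prod_le_prod (fun a _ => hq _) fun a _ => ?_
          by_cases h : π a = ∅
          · simpa [h] using h2
          · simpa [h] using h1 _ h
      _ = C ^ (Jn π) * ρ ^ (m - Jn π) * ∏ a, qw r W ν' (π a) := by
          rw [Finset.prod_mul_distrib, Finset.prod_ite, Finset.prod_const, Finset.prod_const]
          congr 3
          omega
      _ ≤ _ := by
          refine mul_le_mul_of_nonneg_right ?_ (Finset.prod_nonneg fun a _ => hq' _)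
          refine mul_le_mul (pow_le_pow_right₀ hC hπ.2) ?_ (by positivity) (by positivity)
          exact pow_le_pow_of_le_one hρ0 hρ1 (by omega)
  · refine Finset.sum_le_sum_of_subset_of_nonneg ?_ ?_
    · intro π hπ
      simp only [Finset.mem_filter, Finset.mem_univ, true_and] at hπ ⊢
      exact hπ.1
    · intro π _ _
      have := Finset.prod_nonneg (s := Finset.univ) fun a (_ : a ∈ Finset.univ) => hq' (π a)
      positivity

open Classical in
/-- Chernoff part. -/
lemma chern (r : ℕ) (W : Finset (Fin n)) (ν : Finset (Fin n) → ℝ)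
    (hν : ∀ S, 0 ≤ ν S) (R : ℝ) (hR : 1 ≤ R)
    (h : R * (∑ S ∈ Finset.univ.filter (fun S => S ⊆ W), ν S)
      + ∑ S ∈ Finset.univ.filter (fun S => ¬ S ⊆ W ∧ OkC r W S), ν S ≤ 1) (j : ℕ) :
    R ^ j * ∑ σ ∈ Finset.univ.filter (fun σ : Fin m → Finset (Fin n) =>
        ClosedS r σ W ∧ j ≤ Jn (fun a => pat W (σ a))), ∏ a, ν (σ a) ≤ 1 := by
  obtain ⟨g, hg⟩ : ∃ g : Finset (Fin n) → ℝ,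
    g = fun S => if S ⊆ W then R * ν S else if OkC r W S then ν S else 0 := ⟨_, rfl⟩
  have hR0 : 0 ≤ R := by linarith
  have hg0 : ∀ S, 0 ≤ g S := by
    intro S
    simp only [hg]
    split_ifs
    · exact mul_nonneg hR0 (hν _)
    · exact hν _
    · exact le_rfl
  have hgs : ∑ S, g S ≤ 1 := by
    refine le_trans (le_of_eq ?_) h
    rw [Finset.mul_sum, ← Finset.sum_filter_add_sum_filter_not Finset.univ (fun S => S ⊆ W)]
    congr 1
    · refine Finset.sum_congr rfl fun S hS => ?_
      simp only [Finset.mem_filter, Finset.mem_univ, true_and] at hS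
      simp [hg, hS]
    · rw [← Finset.filter_filter, Finset.sum_filter (fun S => OkC r W S)]
      refine Finset.sum_congr rfl fun S hS => ?_
      simp only [Finset.mem_filter, Finset.mem_univ, true_and] at hS
      simp [hg, hS]
  have hp : ∑ σ : Fin m → Finset (Fin n), ∏ a, g (σ a) ≤ 1 := by
    have := Finset.prod_univ_sum (fun _ : Fin m => (Finset.univ : Finset (Finset (Fin n))))
      (fun _ => g)
    rw [Fintype.piFinset_univ] at this
    rw [← this]
    exact Finset.prod_le_one (fun _ _ => Finset.sum_nonneg fun S _ => hg0 S) fun _ _ => hgs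
  refine le_trans ?_ hp
  rw [Finset.mul_sum]
  refine (Finset.sum_le_sum (g := fun σ => ∏ a, g (σ a)) ?_).trans
    (Finset.sum_le_sum_of_subset_of_nonneg (Finset.filter_subset _ _)
      fun σ _ _ => Finset.prod_nonneg fun a _ => hg0 _)
  intro σ hσ
  simp only [Finset.mem_filter, Finset.mem_univ, true_and] at hσ
  calc R ^ j * ∏ a, ν (σ a)
      ≤ R ^ (Jn (fun a => pat W (σ a))) * ∏ a, ν (σ a) :=
        mul_le_mul_of_nonneg_right (pow_le_pow_right₀ hR hσ.2)
          (Finset.prod_nonneg fun a _ => hν _)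
    _ = ∏ a, ((if pat W (σ a) ≠ ∅ then R else 1) * ν (σ a)) := by
        rw [Finset.prod_mul_distrib, Finset.prod_ite, Finset.prod_const, Finset.prod_const_one,
          mul_one]
        unfold Jn
        congr 2
    _ ≤ ∏ a, g (σ a) := by
        refine Finset.prod_le_prod (fun a _ => mul_nonneg (by split_ifs <;> linarith) (hν _))
          fun a _ => ?_
        by_cases hs : σ a ⊆ W
        · have hgs : g (σ a) = R * ν (σ a) := by simp [hg, hs]
          rw [hgs]
          refine mul_le_mul_of_nonneg_right ?_ (hν _)
          split_ifs <;> linarith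
        · have hgs : g (σ a) = ν (σ a) := by
            have := hσ.1 a
            simp [hg, hs, this]
          simp [hgs, pat, hs]

end Closure

section Ensemble

/-- uniform weight on `k`-subsets -/
def nuk (n k : ℕ) (S : Finset (Fin n)) : ℝ := if S.card = k then ((n.choose k : ℝ))⁻¹ else 0

lemma nuk_nonneg (n k : ℕ) (S : Finset (Fin n)) : 0 ≤ nuk n k S := by
  unfold nuk; split_ifs <;> positivity

lemma nuk_sum_eq (n k : ℕ) (s : Finset (Finset (Fin n))) :
    ∑ S ∈ s, nuk n k S = ((s.filter fun S => S.card = k).card : ℝ) / (n.choose k : ℝ) := by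
  unfold nuk
  rw [← Finset.sum_filter, Finset.sum_const, nsmul_eq_mul, div_eq_mul_inv]

lemma nuk_sum (n k : ℕ) (hkn : k ≤ n) : ∑ S, nuk n k S = 1 := by
  rw [nuk_sum_eq]
  have : (Finset.univ.filter fun S : Finset (Fin n) => S.card = k).card = n.choose k := by
    rw [← Finset.powerset_univ, ← Finset.powersetCard_eq_filter, Finset.card_powersetCard]
    simp
  rw [this]
  have := Nat.choose_pos hkn
  field_simp

lemma nuk_inside (n k : ℕ) (W : Finset (Fin n)) :
    ∑ S ∈ Finset.univ.filter (fun S => S ⊆ W), nuk n k S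
      = (W.card.choose k : ℝ) / (n.choose k : ℝ) := by
  rw [nuk_sum_eq]
  congr 2
  rw [← Finset.card_powersetCard]
  congr 1
  ext S
  simp [Finset.mem_powersetCard]

open Classical in
lemma nuk_boundary (n k r : ℕ) (hr : 3 ≤ r) (hrk : r ≤ k) (W : Finset (Fin n)) :
    ((W.card.choose (r - 1) : ℝ) * ((n - W.card).choose (k - r + 1) : ℝ)) / (n.choose k : ℝ) ≤
    ∑ S ∈ Finset.univ.filter (fun S => ¬ OkC r W S), nuk n k S := by
  rw [nuk_sum_eq]
  gcongr
  rw [← Nat.cast_mul, Nat.cast_le]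
  have h1 : (Finset.powersetCard (r - 1) W ×ˢ Finset.powersetCard (k - r + 1) Wᶜ).card
      = W.card.choose (r - 1) * (n - W.card).choose (k - r + 1) := by
    rw [Finset.card_product, Finset.card_powersetCard, Finset.card_powersetCard,
      Finset.card_compl, Fintype.card_fin]
  rw [← h1]
  have key : ∀ A B : Finset (Fin n), A ⊆ W → B ⊆ Wᶜ → (A ∪ B) ∩ W = A ∧ (A ∪ B) \ W = B := by
    intro A B hA hB
    constructor
    · ext i
      have := @hA i
      have := @hB i
      simp only [Finset.mem_inter, Finset.mem_union, Finset.mem_compl] at *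
      tauto
    · ext i
      have := @hA i
      have := @hB i
      simp only [Finset.mem_sdiff, Finset.mem_union, Finset.mem_compl] at *
      tauto
  refine Finset.card_le_card_of_injOn (fun p => p.1 ∪ p.2) ?_ ?_
  · rintro ⟨A, B⟩ h
    simp only [Finset.coe_product, Set.mem_prod, Finset.mem_coe, Finset.mem_powersetCard] at h
    obtain ⟨⟨hA, hA'⟩, hB, hB'⟩ := h
    have hk := key A B hA hB
    simp only [Finset.coe_filter, Set.mem_ofPred_eq, Finset.mem_filter, Finset.mem_univ, true_and]
    constructor
    · intro h
      have h2 := h (by rw [hk.1, hA'])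
      have : B = ∅ := by
        rw [← hk.2]; exact Finset.sdiff_eq_empty_iff_subset.2 h2
      rw [this] at hB'
      simp at hB'
    · rw [Finset.card_union_of_disjoint, hA', hB']
      · omega
      · exact Finset.disjoint_of_subset_left hA (Finset.disjoint_of_subset_right hB
          disjoint_compl_right)
  · rintro ⟨A, B⟩ h ⟨A', B'⟩ h' he
    simp only [Finset.coe_product, Set.mem_prod, Finset.mem_coe, Finset.mem_powersetCard] at h h'
    have h1 := key A B h.1.1 h.2.1
    have h2 := key A' B' h'.1.1 h'.2.1
    simp only at he
    rw [he] at h1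
    rw [Prod.mk.injEq]
    exact ⟨h1.1.symm.trans h2.1, h1.2.symm.trans h2.2⟩

lemma card_fiber (n k : ℕ) (S : Finset (Fin n)) (hS : S.card = k) :
    (Finset.univ.filter fun e : Fin k ↪ Fin n => Finset.univ.image e = S).card
      = k.factorial := by
  have h : Fintype.card (Fin k ↪ S) = k.factorial := by
    rw [Fintype.card_embedding_eq]
    simp [hS, Nat.descFactorial_self]
  rw [← h, ← Finset.card_univ]
  symm
  refine Finset.card_bij (fun e _ => e.trans (Function.Embedding.subtype _)) ?_ ?_ ?_
  · intro e _
    simp only [Finset.mem_filter, Finset.mem_univ, true_and]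
    refine Finset.eq_of_subset_of_card_le ?_ ?_
    · intro i hi
      simp only [Finset.mem_image, Finset.mem_univ, true_and] at hi
      obtain ⟨j, rfl⟩ := hi
      exact (e j).2
    · rw [Finset.card_image_of_injective _ (Function.Embedding.injective _)]
      simp [hS]
  · intro e _ e' _ h
    ext j
    have := DFunLike.congr_fun h j
    simpa using congrArg Fin.val this
  · intro e he
    simp only [Finset.mem_filter, Finset.mem_univ, true_and] at he
    refine ⟨⟨fun j => ⟨e j, ?_⟩, ?_⟩, Finset.mem_univ _, ?_⟩
    · rw [← he]; simp
    · intro j j' h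
      simpa using h
    · ext j; rfl

lemma fiber_nuk (n k : ℕ) (hkn : k ≤ n) (S : Finset (Fin n)) :
    ((Finset.univ.filter fun e : Fin k ↪ Fin n => Finset.univ.image e = S).card : ℝ)
      / (Fintype.card (Fin k ↪ Fin n) : ℝ) = nuk n k S := by
  unfold nuk
  split_ifs with h
  · rw [card_fiber n k S h, Fintype.card_embedding_eq]
    simp only [Fintype.card_fin]
    rw [Nat.descFactorial_eq_factorial_mul_choose]
    have := Nat.choose_pos hkn
    have := Nat.factorial_pos k
    push_cast
    field_simp
  · have : (Finset.univ.filter fun e : Fin k ↪ Fin n => Finset.univ.image e = S) = ∅ := by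
      ext e
      simp only [Finset.mem_filter, Finset.mem_univ, true_and, Finset.notMem_empty, iff_false]
      rintro rfl
      apply h
      rw [Finset.card_image_of_injective _ e.injective]
      simp
    rw [this]; simp

open Classical in
lemma prG_eq (n m k : ℕ) (hkn : k ≤ n) (P : (Fin m → Finset (Fin n)) → Prop) :
    prG n m k (fun ω => P (nbhd ω)) = ∑ σ ∈ Finset.univ.filter P, ∏ a, nuk n k (σ a) := by
  unfold prG
  rw [Finset.card_eq_sum_card_fiberwise (t := Finset.univ.filter P) (f := nbhd)]
  · rw [Nat.cast_sum, Finset.sum_div]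
    refine Finset.sum_congr rfl fun σ hσ => ?_
    simp only [Finset.mem_filter, Finset.mem_univ, true_and] at hσ
    simp_rw [← fiber_nuk n k hkn]
    rw [Finset.prod_div_distrib, Fintype.card_pi, Nat.cast_prod]
    congr 1
    rw [← Nat.cast_prod, ← Fintype.card_piFinset]
    congr 2
    ext ω
    simp only [Finset.mem_filter, Finset.mem_univ, true_and, Fintype.mem_piFinset]
    constructor
    · rintro ⟨_, h⟩ a
      rw [← h]; rfl
    · intro h
      have : nbhd ω = σ := funext h
      exact ⟨this ▸ hσ, this⟩
  · intro ω hω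
    simpa using hω

lemma prG_compl (n m k : ℕ) (hkn : k ≤ n) (P Q : (Fin m → (Fin k ↪ Fin n)) → Prop)
    (h : ∀ ω, ¬ P ω → Q ω) : 1 - prG n m k Q ≤ prG n m k P := by
  classical
  have hpos : 0 < Fintype.card (Fin m → (Fin k ↪ Fin n)) := by
    have : Nonempty (Fin k ↪ Fin n) := ⟨Fin.castLEEmb hkn⟩
    exact Fintype.card_pos
  unfold prG
  rw [sub_le_iff_le_add, ← add_div, le_div_iff₀ (by exact_mod_cast hpos), one_mul]
  rw [← Nat.cast_add, Nat.cast_le, ← Finset.card_univ]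
  refine le_trans (Finset.card_le_card ?_) (Finset.card_union_le _ _)
  intro ω _
  by_cases hp : P ω
  · simp [hp]
  · simp [h ω hp]

/-- LP part: the integral part is closed. -/
lemma integral_closed {n m q k r : ℕ} (hr : 3 ≤ r) (hrk : r ≤ k)
    (f : Fin m → (Fin k → Fin q) → (Fin (k - r + 1) → Fin q))
    (hf : ∀ a, HasMDSInv q k r (f a)) (y : Fin m → Fin (k - r + 1) → Fin q)
    (ω : Fin m → (Fin k ↪ Fin n)) (b : Fin n → Fin q → ℝ) (B : Fin m → (Fin k → Fin q) → ℝ)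
    (hL : MemLOCAL ω b B) (hZ : ZeroOptimal f y B) :
    ClosedS r (nbhd ω) (integralPart b) := by
  classical
  obtain ⟨_, _, hB0, hB1, hmarg⟩ := hL
  intro a ha
  have hsupp : ∀ j, ω a j ∈ integralPart b → ∃ x, ∀ z, B a z ≠ 0 → z j = x := by
    intro j hj
    simp only [integralPart, Finset.mem_filter, Finset.mem_univ, true_and] at hj
    obtain ⟨x, hx⟩ := hj
    refine ⟨x, fun z hz => ?_⟩
    by_contra hne
    have h1 := hmarg a j x
    rw [hx, ← hB1 a] at h1
    have : ∑ z, (if z j = x then B a z else 0) < ∑ z, B a z := by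
      refine Finset.sum_lt_sum (fun z' _ => ?_) ⟨z, Finset.mem_univ _, ?_⟩
      · split_ifs
        · exact le_rfl
        · exact hB0 a z'
      · simp only [hne, if_false]
        exact lt_of_le_of_ne (hB0 a z) (Ne.symm hz)
    linarith
  have huniq : ∀ z z', B a z ≠ 0 → B a z' ≠ 0 → z = z' := by
    intro z z' hz hz'
    by_contra hne
    have hmds := (hf a (y a)).2
    have hle : k - r + 2 ≤ hammingDist z z' := by
      rw [← hmds]
      unfold minHammingDist
      refine Nat.sInf_le ⟨z, ?_, z', ?_, hne, rfl⟩
      · simpa using hZ a z hz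
      · simpa using hZ a z' hz'
    have hcard : r - 1 ≤ (Finset.univ.filter fun j => ω a j ∈ integralPart b).card := by
      refine ha.trans ?_
      have : nbhd ω a ∩ integralPart b ⊆
          (Finset.univ.filter fun j => ω a j ∈ integralPart b).image (ω a) := by
        intro i hi
        simp only [nbhd, Finset.mem_inter, Finset.mem_image, Finset.mem_univ, true_and] at hi
        obtain ⟨⟨j, rfl⟩, h2⟩ := hi
        exact Finset.mem_image_of_mem _ (by simpa using h2)
      exact (Finset.card_le_card this).trans Finset.card_image_le
    have hdisj : Disjoint (Finset.univ.filter fun j => z j ≠ z' j)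
        (Finset.univ.filter fun j => ω a j ∈ integralPart b) := by
      rw [Finset.disjoint_left]
      intro j h1 h2
      simp only [Finset.mem_filter, Finset.mem_univ, true_and] at h1 h2
      obtain ⟨x, hx⟩ := hsupp j h2
      exact h1 ((hx z hz).trans (hx z' hz').symm)
    have h3 := Finset.card_union_of_disjoint hdisj
    have h4 := Finset.card_le_univ ((Finset.univ.filter fun j => z j ≠ z' j) ∪
        (Finset.univ.filter fun j => ω a j ∈ integralPart b))
    simp only [Fintype.card_fin] at h4
    have h5 : hammingDist z z' = (Finset.univ.filter fun j => z j ≠ z' j).card := rfl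
    omega
  obtain ⟨z0, hz0⟩ : ∃ z, B a z ≠ 0 := by
    by_contra hcon
    push Not at hcon
    have := hB1 a
    simp [hcon] at this
  intro i hi
  simp only [nbhd, Finset.mem_image, Finset.mem_univ, true_and] at hi
  obtain ⟨j, rfl⟩ := hi
  simp only [integralPart, Finset.mem_filter, Finset.mem_univ, true_and]
  refine ⟨z0 j, ?_⟩
  rw [hmarg a j (z0 j), ← hB1 a]
  refine Finset.sum_congr rfl fun z _ => ?_
  by_cases hz : B a z = 0
  · simp [hz]
  · rw [huniq z z0 hz hz0]; simp

end Ensemble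

section Combine

/-- lower bound on boundary probability -/
def bbw (n k r w : ℕ) : ℝ :=
  ((w.choose (r - 1) : ℝ) * ((n - w).choose (k - r + 1) : ℝ)) / (n.choose k : ℝ)

lemma bbw_nonneg (n k r w : ℕ) : 0 ≤ bbw n k r w := by unfold bbw; positivity

/-- tilted weight -/
def nuk' (n k : ℕ) (x : ℝ) (S : Finset (Fin n)) : ℝ :=
  x * nuk n k S + if S = ∅ then 1 - x else 0

lemma ratio_bound (o b x : ℝ) (ho : 0 ≤ o) (hx0 : 0 < x) (hx1 : x < 1) (hob : o + b ≤ 1)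
    : o ≤ Real.exp (-(1 - x) * b) * (x * o + (1 - x)) := by
  have h1 : 1 - (1 - x) * (1 - o) ≤ Real.exp (-(1 - x) * b) := by
    have := Real.add_one_le_exp (-(1 - x) * b)
    nlinarith
  have h2 : 0 ≤ x * o + (1 - x) := by nlinarith
  have h3 := mul_le_mul_of_nonneg_right h1 h2
  nlinarith [mul_nonneg (mul_nonneg hx0.le (sub_nonneg.2 hx1.le)) (sq_nonneg (1 - o))]

open Classical in
lemma prod_total {n m : ℕ} (ν : Finset (Fin n) → ℝ) (h : ∑ S, ν S = 1) :
    ∑ σ : Fin m → Finset (Fin n), ∏ a, ν (σ a) = 1 := by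
  have := Finset.prod_univ_sum (fun _ : Fin m => (Finset.univ : Finset (Finset (Fin n))))
    (fun _ => ν)
  rw [Fintype.piFinset_univ] at this
  rw [← this]
  simp [h]

open Classical in
lemma comb (n m k r : ℕ) (hr : 3 ≤ r) (hrk : r ≤ k) (hkn : k ≤ n) (U : Finset (Fin n))
    (x β : ℝ) (hx0 : 0 < x) (hx1 : x < 1) (D : ℕ → Prop) (j : ℕ → ℕ)
    (R : ℕ → ℝ)
    (hβ : ∀ w, U.card ≤ w → D w →
      (1 / x) ^ (j w) * (Real.exp (-(1 - x) * bbw n k r w)) ^ (m - j w) ≤ β)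
    (hR1 : ∀ w, U.card ≤ w → D w → 1 ≤ R w)
    (hR2 : ∀ w, U.card ≤ w → D w →
      R w * (w.choose k : ℝ) ≤ (w.choose (r - 1) : ℝ) * ((n - w).choose (k - r + 1) : ℝ))
    (hβ0 : 0 ≤ β) :
    ∑ σ ∈ Finset.univ.filter (fun σ : Fin m → Finset (Fin n) => D (clo r U σ).card),
        ∏ a, nuk n k (σ a)
      ≤ β + ∑ W ∈ Finset.univ.filter (fun W : Finset (Fin n) => U ⊆ W ∧ D W.card),
          ((R W.card) ^ (j W.card + 1))⁻¹ := by
  have hν0 := nuk_nonneg n k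
  have hP0 : ∀ σ : Fin m → Finset (Fin n), 0 ≤ ∏ a, nuk n k (σ a) :=
    fun σ => Finset.prod_nonneg fun a _ => hν0 _
  have hν'0 : ∀ S, 0 ≤ nuk' n k x S := by
    intro S
    unfold nuk'
    have := mul_nonneg hx0.le (hν0 S)
    split_ifs <;> linarith
  have hP'0 : ∀ σ : Fin m → Finset (Fin n), 0 ≤ ∏ a, nuk' n k x (σ a) :=
    fun σ => Finset.prod_nonneg fun a _ => hν'0 _
  have hν'1 : ∑ S, nuk' n k x S = 1 := by
    unfold nuk'
    rw [Finset.sum_add_distrib, ← Finset.mul_sum, nuk_sum n k hkn]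
    simp
  -- split by the value of the closure
  rw [← Finset.sum_fiberwise_of_maps_to
    (t := Finset.univ.filter (fun W : Finset (Fin n) => U ⊆ W ∧ D W.card))
    (g := fun σ : Fin m → Finset (Fin n) => clo r U σ)]
  swap
  · intro σ hσ
    simp only [Finset.mem_filter, Finset.mem_univ, true_and] at hσ ⊢
    exact ⟨subset_clo, hσ⟩
  have step : ∀ W ∈ Finset.univ.filter (fun W : Finset (Fin n) => U ⊆ W ∧ D W.card),
      ∑ σ ∈ (Finset.univ.filter (fun σ : Fin m → Finset (Fin n) => D (clo r U σ).card)).filter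
          (fun σ => clo r U σ = W), ∏ a, nuk n k (σ a)
        ≤ β * ∑ σ ∈ Finset.univ.filter (fun σ : Fin m → Finset (Fin n) => clo r U σ = W),
            ∏ a, nuk' n k x (σ a) + ((R W.card) ^ (j W.card + 1))⁻¹ := by
    intro W hW
    simp only [Finset.mem_filter, Finset.mem_univ, true_and] at hW
    obtain ⟨hUW, hD⟩ := hW
    have hw := Finset.card_le_card hUW
    have hR1' := hR1 _ hw hD
    have hRpos : 0 < R W.card := by linarith
    have hbd := nuk_boundary n k r hr hrk W
    have htot : ∑ S ∈ Finset.univ.filter (fun S => OkC r W S), nuk n k S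
        + ∑ S ∈ Finset.univ.filter (fun S => ¬ OkC r W S), nuk n k S = 1 := by
      rw [Finset.sum_filter_add_sum_filter_not, nuk_sum n k hkn]
    -- small J
    have hA := tilt (m := m) r U W (nuk n k) (nuk' n k x) hν0 hν'0 (1 / x)
      (Real.exp (-(1 - x) * bbw n k r W.card))
      (by rw [le_div_iff₀ hx0]; linarith) (Real.exp_pos _).le
      (by
        rw [Real.exp_le_one_iff]
        have := bbw_nonneg n k r W.card
        nlinarith)
      (by
        intro S _
        unfold qw
        rw [Finset.mul_sum]
        refine Finset.sum_le_sum fun S' _ => ?_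
        unfold nuk'
        rw [mul_add, ← mul_assoc, one_div_mul_cancel hx0.ne', one_mul]
        have : 0 ≤ 1 / x * (if S' = ∅ then 1 - x else 0) := by
          refine mul_nonneg (by positivity) ?_
          split_ifs <;> linarith
        linarith)
      (by
        have e : qw r W (nuk' n k x) ∅ = x * qw r W (nuk n k) ∅ + (1 - x) := by
          unfold qw nuk'
          rw [Finset.sum_add_distrib, ← Finset.mul_sum, Finset.sum_ite_eq', if_pos]
          simp [OkC, pat]
        rw [e]
        refine ratio_bound _ _ _ (Finset.sum_nonneg fun _ _ => hν0 _) hx0 hx1 ?_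
        have h1 : qw r W (nuk n k) ∅ ≤ ∑ S ∈ Finset.univ.filter (fun S => OkC r W S), nuk n k S := by
          unfold qw
          refine Finset.sum_le_sum_of_subset_of_nonneg ?_ fun _ _ _ => hν0 _
          intro S hS
          simp only [Finset.mem_filter, Finset.mem_univ, true_and] at hS ⊢
          exact hS.1
        unfold bbw
        linarith)
      (j W.card)
    -- large J
    have hB := chern (m := m) r W (nuk n k) hν0 (R W.card) hR1' (by
        rw [nuk_inside]
        have h1 : ∑ S ∈ Finset.univ.filter (fun S => ¬ S ⊆ W ∧ OkC r W S), nuk n k S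
            ≤ ∑ S ∈ Finset.univ.filter (fun S => OkC r W S), nuk n k S := by
          refine Finset.sum_le_sum_of_subset_of_nonneg ?_ fun _ _ _ => hν0 _
          intro S hS
          simp only [Finset.mem_filter, Finset.mem_univ, true_and] at hS ⊢
          exact hS.2
        have h2 : R W.card * ((W.card.choose k : ℝ) / (n.choose k : ℝ)) ≤
            ((W.card.choose (r - 1) : ℝ) * ((n - W.card).choose (k - r + 1) : ℝ))
              / (n.choose k : ℝ) := by
          rw [← mul_div_assoc]
          have := hR2 _ hw hD
          gcongr
        linarith) (j W.card + 1)
    have hsplit : ∑ σ ∈ (Finset.univ.filter (fun σ : Fin m → Finset (Fin n) =>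
          D (clo r U σ).card)).filter (fun σ => clo r U σ = W), ∏ a, nuk n k (σ a)
        ≤ ∑ σ ∈ Finset.univ.filter (fun σ : Fin m → Finset (Fin n) =>
            clo r U σ = W ∧ Jn (fun a => pat W (σ a)) ≤ j W.card), ∏ a, nuk n k (σ a)
          + ∑ σ ∈ Finset.univ.filter (fun σ : Fin m → Finset (Fin n) =>
            ClosedS r σ W ∧ j W.card + 1 ≤ Jn (fun a => pat W (σ a))), ∏ a, nuk n k (σ a) := by
      rw [← Finset.sum_union_inter]
      refine le_trans ?_ (le_add_of_nonneg_right (Finset.sum_nonneg fun σ _ => hP0 σ))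
      refine Finset.sum_le_sum_of_subset_of_nonneg ?_ fun σ _ _ => hP0 σ
      intro σ hσ
      simp only [Finset.mem_filter, Finset.mem_univ, true_and, Finset.mem_union] at hσ ⊢
      by_cases hJ : Jn (fun a => pat W (σ a)) ≤ j W.card
      · exact Or.inl ⟨hσ.2, hJ⟩
      · exact Or.inr ⟨(clo_eq_iff.1 hσ.2).1, by omega⟩
    refine hsplit.trans (add_le_add (hA.trans ?_) ?_)
    · exact mul_le_mul_of_nonneg_right (hβ _ hw hD) (Finset.sum_nonneg fun σ _ => hP'0 σ)
    · rw [← one_div, le_div_iff₀' (by positivity)]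
      exact hB
  refine (Finset.sum_le_sum step).trans ?_
  rw [Finset.sum_add_distrib, ← Finset.mul_sum]
  refine add_le_add ?_ le_rfl
  refine mul_le_of_le_one_right hβ0 ?_
  calc _ ≤ ∑ W, ∑ σ ∈ Finset.univ.filter (fun σ : Fin m → Finset (Fin n) => clo r U σ = W),
            ∏ a, nuk' n k x (σ a) :=
        Finset.sum_le_sum_of_subset_of_nonneg (Finset.filter_subset _ _)
          fun W _ _ => Finset.sum_nonneg fun σ _ => hP'0 σ
    _ = ∑ σ : Fin m → Finset (Fin n), ∏ a, nuk' n k x (σ a) :=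
        Finset.sum_fiberwise _ _ _
    _ = 1 := prod_total _ hν'1
    _ ≤ 1 := le_rfl

open Classical in
lemma sum_supersets (n : ℕ) (U : Finset (Fin n)) (D : ℕ → Prop) (F : ℕ → ℝ) (hF : ∀ w, 0 ≤ F w) :
    ∑ W ∈ Finset.univ.filter (fun W : Finset (Fin n) => U ⊆ W ∧ D W.card), F W.card
      ≤ ∑ s ∈ Finset.range (n + 1), (n.choose s : ℝ) *
          (if D (U.card + s) then F (U.card + s) else 0) := by
  have h := Finset.sum_powerset_apply_card (fun s => if D (U.card + s) then F (U.card + s) else 0)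
    (x := (Finset.univ : Finset (Fin n)))
  simp only [Finset.card_univ, Fintype.card_fin, nsmul_eq_mul] at h
  rw [← h]
  have h1 : ∑ W ∈ Finset.univ.filter (fun W : Finset (Fin n) => U ⊆ W ∧ D W.card), F W.card
      = ∑ S ∈ (Finset.univ.filter (fun W : Finset (Fin n) => U ⊆ W ∧ D W.card)).image (· \ U),
        (if D (U.card + S.card) then F (U.card + S.card) else 0) := by
    rw [Finset.sum_image]
    · refine Finset.sum_congr rfl fun W hW => ?_
      simp only [Finset.mem_filter, Finset.mem_univ, true_and] at hW
      have : U.card + (W \ U).card = W.card := by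
        rw [Finset.card_sdiff_of_subset hW.1]
        have := Finset.card_le_card hW.1
        omega
      simp only [this, hW.2, if_true]
    · intro W hW W' hW' he
      simp only [Finset.coe_filter, Finset.mem_univ, true_and, Set.mem_ofPred_eq] at hW hW'
      simp only at he
      rw [← Finset.sdiff_union_of_subset hW.1, he, Finset.sdiff_union_of_subset hW'.1]
  rw [h1]
  refine Finset.sum_le_sum_of_subset_of_nonneg (fun S _ => by simp) ?_
  intro S _ _
  split_ifs
  · exact hF _
  · exact le_rfl

end Combine

section Analysis

lemma choose_lower (w t : ℕ) (y : ℝ) (hy : 0 ≤ y) (h : y ≤ (w : ℝ) - t) :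
    y ^ t ≤ (t.factorial : ℝ) * (w.choose t : ℝ) := by
  have h1 : t ≤ w := by
    have : (t : ℝ) ≤ w := by linarith
    exact_mod_cast this
  have h2 := Nat.pow_le_choose (α := ℝ) t w
  rw [div_le_iff₀' (by positivity)] at h2
  refine le_trans ?_ h2
  refine pow_le_pow_left₀ hy ?_ _
  rw [Nat.cast_sub (by omega)]
  push_cast
  linarith

lemma choose_lower' (w t : ℕ) (N η ε : ℝ) (hN : 0 ≤ N) (hη0 : 0 ≤ η) (hη : η ≤ 1)
    (hte : t * η ≤ ε) (h : (1 - η) * N ≤ (w : ℝ) - t) :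
    (1 - ε) * N ^ t ≤ (t.factorial : ℝ) * (w.choose t : ℝ) := by
  refine le_trans ?_ (choose_lower w t ((1 - η) * N) (mul_nonneg (by linarith) hN) h)
  rw [mul_pow]
  refine mul_le_mul_of_nonneg_right ?_ (by positivity)
  have := one_add_mul_le_pow (a := -η) (by linarith) t
  have e : (1 : ℝ) - η = 1 + -η := by ring
  rw [e]
  linarith

lemma bbw_lower (n k r w : ℕ) (hr : 3 ≤ r) (hrk : r ≤ k) (hkn : k ≤ n) (ε δ : ℝ)
    (hε0 : 0 < ε) (hε1 : ε < 1)
    (hδ0 : 0 < δ) (hδ1 : δ ≤ 1 / 8) (hδ : 2 * k * δ ≤ ε) (hw : (r : ℝ) * r ≤ ε * w)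
    (hwn : (w : ℝ) < δ * n) (hkδ : (k : ℝ) ≤ δ * n) :
    (1 - ε) ^ 2 * (k.choose (r - 1) : ℝ) * ((w : ℝ) / n) ^ (r - 1) ≤ bbw n k r w := by
  have hr0 : (0 : ℝ) < r := by positivity
  have hn0 : (0 : ℝ) < n := by
    have : 0 < n := by omega
    exact_mod_cast this
  have hwn' : w ≤ n := by
    have : (w : ℝ) ≤ n := by nlinarith
    exact_mod_cast this
  have hr1 : ((r - 1 : ℕ) : ℝ) = r - 1 := by
    rw [Nat.cast_sub (by omega)]; simp
  have hdk : ((k - r + 1 : ℕ) : ℝ) ≤ k := by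
    have : k - r + 1 ≤ k := by omega
    exact_mod_cast this
  have A1 : (1 - ε) * (w : ℝ) ^ (r - 1) ≤ ((r - 1).factorial : ℝ) * (w.choose (r - 1) : ℝ) := by
    refine choose_lower' w (r - 1) w (ε / r) ε (by positivity) (by positivity) ?_ ?_ ?_
    · rw [div_le_one hr0]
      have : (3 : ℝ) ≤ r := by exact_mod_cast hr
      linarith
    · rw [hr1, mul_div_assoc', div_le_iff₀ hr0]
      nlinarith
    · have : (r : ℝ) ≤ ε / r * w := by
        rw [div_mul_eq_mul_div, le_div_iff₀ hr0]
        exact hw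
      rw [hr1]
      linarith
  have A2 : (1 - ε) * (n : ℝ) ^ (k - r + 1) ≤
      ((k - r + 1).factorial : ℝ) * ((n - w).choose (k - r + 1) : ℝ) := by
    refine choose_lower' (n - w) (k - r + 1) n (2 * δ) ε (by positivity) (by positivity)
      (by linarith) ?_ ?_
    · nlinarith
    · rw [Nat.cast_sub hwn']
      linarith
  have A3 : (k.factorial : ℝ) * (n.choose k : ℝ) ≤ (n : ℝ) ^ k := by
    have := Nat.choose_le_pow_div (α := ℝ) k n
    rwa [le_div_iff₀' (by positivity)] at this
  have hpos : (0 : ℝ) < n.choose k := by exact_mod_cast Nat.choose_pos hkn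
  have hK : (k.choose (r - 1) : ℝ) * ((r - 1).factorial : ℝ) * ((k - r + 1).factorial : ℝ)
      = (k.factorial : ℝ) := by
    have := Nat.choose_mul_factorial_mul_factorial (n := k) (k := r - 1) (by omega)
    have e : k - (r - 1) = k - r + 1 := by omega
    rw [e] at this
    exact_mod_cast this
  have hpk : (n : ℝ) ^ k = (n : ℝ) ^ (r - 1) * (n : ℝ) ^ (k - r + 1) := by
    rw [← pow_add]; congr 1; omega
  unfold bbw
  rw [le_div_iff₀ hpos]
  set a : ℝ := ((r - 1).factorial : ℝ)
  set c : ℝ := ((k - r + 1).factorial : ℝ)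
  have ha : 0 < a := by simp only [a]; positivity
  have hc : 0 < c := by simp only [c]; positivity
  have hac : 0 < a * c := by positivity
  rw [← mul_le_mul_iff_right₀ hac]
  have hprod := mul_le_mul A1 A2 (mul_nonneg (by linarith) (by positivity))
    (by positivity)
  calc a * c * ((1 - ε) ^ 2 * (k.choose (r - 1) : ℝ) * ((w : ℝ) / n) ^ (r - 1) * (n.choose k : ℝ))
      = (1 - ε) ^ 2 * ((w : ℝ) / n) ^ (r - 1) *
          (((k.choose (r - 1) : ℝ) * a * c) * (n.choose k : ℝ)) := by ring
    _ ≤ (1 - ε) ^ 2 * ((w : ℝ) / n) ^ (r - 1) * (n : ℝ) ^ k := by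
        rw [hK]
        refine mul_le_mul_of_nonneg_left A3 (by positivity)
    _ = ((1 - ε) * (w : ℝ) ^ (r - 1)) * ((1 - ε) * (n : ℝ) ^ (k - r + 1)) := by
        rw [hpk, div_pow]
        field_simp
    _ ≤ _ := hprod
    _ = _ := by ring

lemma R_bound (n k r w : ℕ) (hr : 3 ≤ r) (hrk : r ≤ k) (δ : ℝ)
    (hδ1 : δ ≤ 1 / 8) (hw0 : 0 < w)
    (hwn : (w : ℝ) < δ * n) (hkδ : (k : ℝ) ≤ δ * n) :
    ((n : ℝ) / (2 * w)) ^ (k - r + 1) * (w.choose k : ℝ) ≤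
      (w.choose (r - 1) : ℝ) * ((n - w).choose (k - r + 1) : ℝ) := by
  have hw0' : (0 : ℝ) < w := by exact_mod_cast hw0
  have hn0 : (0 : ℝ) ≤ n := by positivity
  have hwn' : w ≤ n := by
    have : (w : ℝ) ≤ n := by nlinarith
    exact_mod_cast this
  have hdk : ((k - r + 1 : ℕ) : ℝ) ≤ k := by
    have : k - r + 1 ≤ k := by omega
    exact_mod_cast this
  have h1 : w.choose k ≤ w.choose (r - 1) * w.choose (k - r + 1) := by
    have e : k - (r - 1) = k - r + 1 := by omega
    rcases le_or_gt k w with hkw | hkw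
    · have := Nat.choose_mul (n := w) (k := k) (s := r - 1) (by omega)
      rw [e] at this
      calc w.choose k ≤ w.choose k * k.choose (r - 1) :=
            Nat.le_mul_of_pos_right _ (Nat.choose_pos (by omega))
        _ = _ := this
        _ ≤ _ := Nat.mul_le_mul_left _ (Nat.choose_le_choose _ (by omega))
    · rw [Nat.choose_eq_zero_of_lt hkw]; exact Nat.zero_le _
  have h2 := Nat.choose_le_pow_div (α := ℝ) (k - r + 1) w
  have h3 := choose_lower (n - w) (k - r + 1) ((n : ℝ) / 2) (by positivity) (by
    rw [Nat.cast_sub hwn']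
    nlinarith)
  have h4 : ((n : ℝ) / (2 * w)) ^ (k - r + 1) * (w.choose (k - r + 1) : ℝ) ≤
      ((n - w).choose (k - r + 1) : ℝ) := by
    calc ((n : ℝ) / (2 * w)) ^ (k - r + 1) * (w.choose (k - r + 1) : ℝ)
        ≤ ((n : ℝ) / (2 * w)) ^ (k - r + 1) * ((w : ℝ) ^ (k - r + 1) / ((k - r + 1).factorial : ℝ)) := by
          gcongr
      _ = ((n : ℝ) / 2) ^ (k - r + 1) / ((k - r + 1).factorial : ℝ) := by
          rw [div_pow, div_pow, mul_pow]
          field_simp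
      _ ≤ _ := by
          rw [div_le_iff₀' (by positivity)]
          exact h3
  calc ((n : ℝ) / (2 * w)) ^ (k - r + 1) * (w.choose k : ℝ)
      ≤ ((n : ℝ) / (2 * w)) ^ (k - r + 1) * ((w.choose (r - 1) : ℝ) * (w.choose (k - r + 1) : ℝ)) := by
        gcongr
        exact_mod_cast h1
    _ = (w.choose (r - 1) : ℝ) * (((n : ℝ) / (2 * w)) ^ (k - r + 1) * (w.choose (k - r + 1) : ℝ)) := by
        ring
    _ ≤ _ := by gcongr

lemma amgm (t : ℕ) (ht : 1 ≤ t) (u w : ℝ) (hu : 0 < u) (hw : u ≤ w) :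
    ((t : ℝ) + 1) ^ (t + 1) * u ^ t * (w - u) ≤ (t : ℝ) ^ t * w ^ (t + 1) := by
  have ht0 : (0 : ℝ) < t := by exact_mod_cast ht
  have hw0 : 0 < w := by linarith
  have h := one_add_mul_le_pow (a := w * t / ((t + 1) * u) - 1) (by
    have : 0 ≤ w * t / ((t + 1) * u) := by positivity
    linarith) (t + 1)
  have e1 : 1 + ((t + 1 : ℕ) : ℝ) * (w * t / ((t + 1) * u) - 1) = t * (w - u) / u := by
    push_cast
    field_simp
    ring
  have e2 : (1 + (w * t / (((t : ℝ) + 1) * u) - 1)) = w * t / ((t + 1) * u) := by ring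
  rw [e1, e2, div_pow, div_le_div_iff₀ hu (by positivity), mul_pow, mul_pow] at h
  have e3 : (t : ℝ) * u * (((t : ℝ) + 1) ^ (t + 1) * u ^ t * (w - u)) ≤
      t * u * ((t : ℝ) ^ t * w ^ (t + 1)) := by
    calc _ = (t : ℝ) * (w - u) * (((t : ℝ) + 1) ^ (t + 1) * u ^ (t + 1)) := by ring
      _ ≤ _ := h
      _ = _ := by ring
  exact le_of_mul_le_mul_left e3 (by positivity)

/-- `s / d ≤ K μ_c Y` -/
lemma growth (k r : ℕ) (hr : 3 ≤ r) (hrk : r ≤ k) (u w : ℝ) (hu : 0 < u) (hw : u ≤ w) :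
    (w - u) / ((k - r + 1 : ℕ) : ℝ) ≤
      (k.choose (r - 1) : ℝ) * muc k r * (w ^ (r - 1) / u ^ (r - 2)) := by
  obtain ⟨t, rfl⟩ : ∃ t, r = t + 2 := ⟨r - 2, by omega⟩
  have ht : 1 ≤ t := by omega
  have ht0 : (0 : ℝ) < t := by exact_mod_cast ht
  have hA := amgm t ht u w hu hw
  have hid : (k.choose (t + 2) : ℝ) * ((t : ℝ) + 2) =
      (k.choose (t + 1) : ℝ) * ((k - (t + 2) + 1 : ℕ) : ℝ) := by
    have := Nat.choose_succ_right_eq k (t + 1)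
    have e : k - (t + 1) = k - (t + 2) + 1 := by omega
    rw [e] at this
    exact_mod_cast this
  have hK : (0 : ℝ) < k.choose (t + 2) := by exact_mod_cast Nat.choose_pos hrk
  have hK1 : (0 : ℝ) < k.choose (t + 1) := by exact_mod_cast Nat.choose_pos (by omega)
  have hd : (0 : ℝ) < ((k - (t + 2) + 1 : ℕ) : ℝ) := by positivity
  unfold muc
  have e1 : t + 2 - 1 = t + 1 := by omega
  have e2 : t + 2 - 2 = t := by omega
  have e3 : ((t + 2 : ℕ) : ℝ) - 2 = t := by push_cast; ring
  have e4 : ((t + 2 : ℕ) : ℝ) - 1 = t + 1 := by push_cast; ring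
  have e5 : ((t + 2 : ℕ) : ℝ) = t + 2 := by push_cast; ring
  rw [e1, e2, e3, e4, e5]
  have e6 : (k.choose (t + 1) : ℝ) * (((k.choose (t + 2) : ℝ))⁻¹ *
      ((t : ℝ) ^ t / (((t : ℝ) + 2) * ((t : ℝ) + 1) ^ (t + 1)))) =
      (t : ℝ) ^ t / (((t : ℝ) + 1) ^ (t + 1) * ((k - (t + 2) + 1 : ℕ) : ℝ)) := by
    rw [inv_mul_eq_div, div_div, mul_div_assoc', div_eq_div_iff (by positivity) (by positivity)]
    have : (t : ℝ) ^ t * (((t : ℝ) + 2) * ((t : ℝ) + 1) ^ (t + 1) * (k.choose (t + 2) : ℝ)) =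
      (t : ℝ) ^ t * ((t : ℝ) + 1) ^ (t + 1) * ((k.choose (t + 2) : ℝ) * ((t : ℝ) + 2)) := by ring
    rw [this, hid]
    ring
  rw [e6, div_mul_div_comm, div_le_div_iff₀ hd (by positivity)]
  calc (w - u) * (((t : ℝ) + 1) ^ (t + 1) * ((k - (t + 2) + 1 : ℕ) : ℝ) * u ^ t)
      = (((t : ℝ) + 1) ^ (t + 1) * u ^ t * (w - u)) * ((k - (t + 2) + 1 : ℕ) : ℝ) := by ring
    _ ≤ _ := by gcongr

end Analysis

section Final

/-- threshold on number of internal constraints -/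
def jth (k r : ℕ) (ε : ℝ) (u w : ℕ) : ℕ :=
  ⌊((w : ℝ) - u) / ((k - r + 1 : ℕ) : ℝ) + ε * w⌋₊

set_option maxHeartbeats 1000000 in
lemma beta_bound (n m k r u w : ℕ) (hr : 3 ≤ r) (hrk : r ≤ k) (hkn : k ≤ n) (ε δ x μ c0 : ℝ)
    (hε0 : 0 < ε) (hε1 : ε < 1) (hx0 : 0 < x) (hx1 : x < 1) (hμ0 : 0 < μ) (hc0 : 0 < c0)
    (hδ0 : 0 < δ) (hδ1 : δ ≤ 1 / 8) (hδ : 2 * k * δ ≤ ε) (hu0 : 0 < u) (huw : u ≤ w)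
    (hw : (r : ℝ) * r ≤ ε * w)
    (hwn : (w : ℝ) < δ * n) (hkδ : (k : ℝ) ≤ δ * n)
    (hm1 : 2 * (n : ℝ) ≤ ε * m) (hm2 : μ * (n : ℝ) ^ (r - 1) / (u : ℝ) ^ (r - 2) ≤ m)
    (hgap : -Real.log x * ((k.choose (r - 1) : ℝ) * muc k r + ε)
      - (1 - x) * (1 - ε) ^ 3 * μ * (k.choose (r - 1) : ℝ) ≤ -c0) :
    (1 / x) ^ (jth k r ε u w) * (Real.exp (-(1 - x) * bbw n k r w)) ^ (m - jth k r ε u w)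
      ≤ Real.exp (-c0 * u) := by
  have hu0' : (0 : ℝ) < u := by exact_mod_cast hu0
  have huw' : (u : ℝ) ≤ w := by exact_mod_cast huw
  have hw0 : (0 : ℝ) < w := by linarith
  have hn0 : (0 : ℝ) < n := by
    have : 0 < n := by omega
    exact_mod_cast this
  have hd1 : (1 : ℝ) ≤ ((k - r + 1 : ℕ) : ℝ) := by push_cast; linarith [Nat.cast_nonneg (α := ℝ) (k - r)]
  have hL : 0 < -Real.log x := by linarith [Real.log_neg hx0 hx1]
  set L := -Real.log x with hLdef
  set K : ℝ := (k.choose (r - 1) : ℝ) with hK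
  have hK0 : 0 < K := by
    rw [hK]; exact_mod_cast Nat.choose_pos (by omega)
  set j := jth k r ε u w with hj
  set Y : ℝ := (w : ℝ) ^ (r - 1) / (u : ℝ) ^ (r - 2) with hY
  have hYw : (w : ℝ) ≤ Y := by
    rw [hY, le_div_iff₀ (by positivity)]
    have e : r - 1 = (r - 2) + 1 := by omega
    rw [e, pow_succ, mul_comm]
    gcongr
  have hgr := growth k r hr hrk u w hu0' huw'
  have hjr : (j : ℝ) ≤ ((w : ℝ) - u) / ((k - r + 1 : ℕ) : ℝ) + ε * w := by
    rw [hj]; unfold jth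
    refine Nat.floor_le ?_
    have : 0 ≤ (w : ℝ) - u := by linarith
    positivity
  have hjY : (j : ℝ) ≤ (K * muc k r + ε) * Y := by
    have : ε * w ≤ ε * Y := by gcongr
    linarith
  have hjm : (j : ℝ) ≤ ε * m := by
    have h1 : ((w : ℝ) - u) / ((k - r + 1 : ℕ) : ℝ) ≤ w := by
      rw [div_le_iff₀ (by linarith)]
      nlinarith
    have h2 : ε * w ≤ w := by nlinarith
    have h3 : (w : ℝ) ≤ n := by nlinarith
    linarith
  have hjm' : j ≤ m := by
    have : (j : ℝ) ≤ m := by nlinarith [Nat.cast_nonneg (α := ℝ) m]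
    exact_mod_cast this
  have hb := bbw_lower n k r w hr hrk hkn ε δ hε0 hε1 hδ0 hδ1 hδ hw hwn hkδ
  have hbm : (1 - ε) ^ 2 * K * μ * Y ≤ bbw n k r w * m := by
    calc (1 - ε) ^ 2 * K * μ * Y
        = ((1 - ε) ^ 2 * K * ((w : ℝ) / n) ^ (r - 1)) *
            (μ * (n : ℝ) ^ (r - 1) / (u : ℝ) ^ (r - 2)) := by
          rw [hY, div_pow]
          field_simp
      _ ≤ bbw n k r w * m := by
          refine mul_le_mul hb hm2 (by positivity) (bbw_nonneg _ _ _ _)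
  have e1 : (1 / x) ^ j = Real.exp (j * L) := by
    rw [mul_comm, Real.exp_mul, Real.rpow_natCast, hLdef, Real.exp_neg, Real.exp_log hx0, one_div]
  have e2 : (Real.exp (-(1 - x) * bbw n k r w)) ^ (m - j) =
      Real.exp (((m : ℝ) - j) * (-(1 - x) * bbw n k r w)) := by
    rw [← Real.exp_nat_mul, Nat.cast_sub hjm']
  rw [e1, e2, ← Real.exp_add]
  refine Real.exp_le_exp.2 ?_
  have hbb := bbw_nonneg n k r w
  have hx1' : 0 < 1 - x := by linarith
  have s1 : (1 - ε) * ((1 - ε) ^ 2 * K * μ * Y) ≤ ((m : ℝ) - j) * bbw n k r w := by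
    calc (1 - ε) * ((1 - ε) ^ 2 * K * μ * Y) ≤ (1 - ε) * (bbw n k r w * m) :=
          mul_le_mul_of_nonneg_left hbm (by linarith)
      _ = ((1 - ε) * m) * bbw n k r w := by ring
      _ ≤ _ := mul_le_mul_of_nonneg_right (by linarith) hbb
  have s2 := mul_le_mul_of_nonneg_left s1 hx1'.le
  have s3 := mul_le_mul_of_nonneg_right hjY hL.le
  have hY0 : 0 ≤ Y := by linarith
  have s4 := mul_le_mul_of_nonneg_right hgap hY0
  have s5 : c0 * u ≤ c0 * Y := by
    refine mul_le_mul_of_nonneg_left ?_ hc0.le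
    linarith
  calc (j : ℝ) * L + ((m : ℝ) - j) * (-(1 - x) * bbw n k r w)
      = j * L - (1 - x) * (((m : ℝ) - j) * bbw n k r w) := by ring
    _ ≤ (K * muc k r + ε) * Y * L - (1 - x) * ((1 - ε) * ((1 - ε) ^ 2 * K * μ * Y)) := by linarith
    _ = (L * (K * muc k r + ε) - (1 - x) * (1 - ε) ^ 3 * μ * K) * Y := by ring
    _ ≤ -c0 * Y := s4
    _ ≤ -c0 * u := by linarith

lemma tail_bound (n k r u s : ℕ) (ε δ : ℝ) (hε0 : 0 < ε)
    (hδ0 : 0 < δ) (hδ1 : δ ≤ 1 / 8) (hδε : (2 * δ) ^ ε ≤ Real.exp (-3)) (hu0 : 0 < u)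
    (hwn : ((u + s : ℕ) : ℝ) < δ * n) :
    (n.choose s : ℝ) * ((((n : ℝ) / (2 * (u + s : ℕ))) ^ (k - r + 1)) ^
      (jth k r ε u (u + s) + 1))⁻¹ ≤ Real.exp (-(u : ℝ)) * Real.exp (-1) ^ s := by
  set w := u + s with hwdef
  have hw0 : (0 : ℝ) < w := by
    have : 0 < w := by omega
    exact_mod_cast this
  have hn0 : (0 : ℝ) < n := by nlinarith
  set y : ℝ := 2 * w / n with hy
  have hy0 : 0 < y := by positivity
  have hyδ : y ≤ 2 * δ := by
    rw [hy, div_le_iff₀ hn0]; linarith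
  have hy1 : y ≤ 1 := by linarith
  set d := k - r + 1 with hd
  have hd1 : (1 : ℝ) ≤ (d : ℝ) := by
    have : 1 ≤ d := by omega
    exact_mod_cast this
  set j := jth k r ε u w with hj
  have hjr : (s : ℝ) / d + ε * w ≤ ((j + 1 : ℕ) : ℝ) := by
    have := Nat.lt_floor_add_one (((w : ℝ) - u) / (d : ℝ) + ε * w)
    have e : (w : ℝ) - u = s := by rw [hwdef]; push_cast; ring
    rw [hj]
    unfold jth
    rw [← hd]
    rw [e] at this ⊢
    push_cast
    linarith
  have e1 : ((((n : ℝ) / (2 * w)) ^ d) ^ (j + 1))⁻¹ = y ^ (d * (j + 1)) := by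
    rw [← pow_mul, ← inv_pow, inv_div]
  rw [e1]
  have h1 : y ^ (d * (j + 1)) ≤ y ^ s * Real.exp (-3) ^ w := by
    rw [← Real.rpow_natCast]
    calc y ^ ((d * (j + 1) : ℕ) : ℝ) ≤ y ^ ((s : ℝ) + ε * w) := by
          refine Real.rpow_le_rpow_of_exponent_ge hy0 hy1 ?_
          have h2 : (d : ℝ) * ((s : ℝ) / d + ε * w) ≤ d * ((j + 1 : ℕ) : ℝ) := by gcongr
          have h3 : (d : ℝ) * ((s : ℝ) / d + ε * w) = s + d * (ε * w) := by
            field_simp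
          have h4 : ε * w ≤ d * (ε * w) := le_mul_of_one_le_left (by positivity) hd1
          push_cast at h2 h3 ⊢
          linarith
      _ = y ^ s * (y ^ ε) ^ w := by
          rw [Real.rpow_add hy0, Real.rpow_natCast, Real.rpow_mul hy0.le, Real.rpow_natCast]
      _ ≤ y ^ s * Real.exp (-3) ^ w := by
          gcongr
          exact (Real.rpow_le_rpow hy0.le hyδ hε0.le).trans hδε
  have h2 : (n.choose s : ℝ) * y ^ s ≤ Real.exp (2 * w) := by
    calc (n.choose s : ℝ) * y ^ s ≤ ((n : ℝ) ^ s / (s.factorial : ℝ)) * y ^ s := by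
          gcongr
          exact Nat.choose_le_pow_div s n
      _ = (2 * w) ^ s / (s.factorial : ℝ) := by
          rw [hy, div_pow]
          field_simp
      _ ≤ _ := Real.pow_div_factorial_le_exp _ (by positivity) _
  calc (n.choose s : ℝ) * y ^ (d * (j + 1)) ≤ (n.choose s : ℝ) * (y ^ s * Real.exp (-3) ^ w) := by
        gcongr
    _ = ((n.choose s : ℝ) * y ^ s) * Real.exp (-3) ^ w := by ring
    _ ≤ Real.exp (2 * w) * Real.exp (-3) ^ w := by gcongr
    _ = Real.exp (-(u : ℝ)) * Real.exp (-1) ^ s := by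
        rw [← Real.exp_nat_mul, ← Real.exp_nat_mul, ← Real.exp_add, ← Real.exp_add]
        congr 1
        rw [hwdef]; push_cast; ring

lemma geom_sum_le (n : ℕ) : ∑ s ∈ Finset.range (n + 1), Real.exp (-1) ^ s ≤ 2 := by
  have h1 : Real.exp (-1) ≤ 1 / 2 := by
    rw [Real.exp_neg, inv_eq_one_div]
    have := Real.add_one_le_exp (1 : ℝ)
    gcongr
    linarith
  calc ∑ s ∈ Finset.range (n + 1), Real.exp (-1) ^ s
      ≤ ∑ s ∈ Finset.range (n + 1), (1 / 2 : ℝ) ^ s := by gcongr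
    _ ≤ 2 := sum_geometric_two_le _

open Classical in
lemma prob_bound (n m k r u : ℕ) (hr : 3 ≤ r) (hrk : r ≤ k) (hkn : k ≤ n) (ε δ x μ c0 : ℝ)
    (hε0 : 0 < ε) (hε1 : ε < 1) (hx0 : 0 < x) (hx1 : x < 1) (hμ0 : 0 < μ) (hc0 : 0 < c0)
    (hδ0 : 0 < δ) (hδ1 : δ ≤ 1 / 8) (hδ : 2 * k * δ ≤ ε) (hu0 : 0 < u)
    (hδε : (2 * δ) ^ ε ≤ Real.exp (-3))
    (hw : (r : ℝ) * r ≤ ε * u) (hkδ : (k : ℝ) ≤ δ * n)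
    (hm1 : 2 * (n : ℝ) ≤ ε * m) (hm2 : μ * (n : ℝ) ^ (r - 1) / (u : ℝ) ^ (r - 2) ≤ m)
    (hgap : -Real.log x * ((k.choose (r - 1) : ℝ) * muc k r + ε)
      - (1 - x) * (1 - ε) ^ 3 * μ * (k.choose (r - 1) : ℝ) ≤ -c0)
    (U : Finset (Fin n)) (hU : U.card = u) :
    prG n m k (fun ω => ((clo r U (nbhd ω)).card : ℝ) < δ * n) ≤
      Real.exp (-c0 * u) + 2 * Real.exp (-(u : ℝ)) := by
  rw [prG_eq n m k hkn (fun σ => ((clo r U σ).card : ℝ) < δ * n)]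
  have hc := comb n m k r hr hrk hkn U x (Real.exp (-c0 * u)) hx0 hx1
    (fun w => (w : ℝ) < δ * n) (jth k r ε u) (fun w => ((n : ℝ) / (2 * w)) ^ (k - r + 1))
    (by
      intro w h1 h2
      rw [hU] at h1
      refine beta_bound n m k r u w hr hrk hkn ε δ x μ c0 hε0 hε1 hx0 hx1 hμ0 hc0 hδ0 hδ1 hδ hu0
        h1 (hw.trans ?_) h2 hkδ hm1 hm2 hgap
      gcongr)
    (by
      intro w h1 h2
      rw [hU] at h1
      have hw0 : (0 : ℝ) < w := by
        have : 0 < w := by omega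
        exact_mod_cast this
      refine one_le_pow₀ ?_
      rw [le_div_iff₀ (by positivity)]
      have : (0 : ℝ) ≤ n := by positivity
      nlinarith)
    (by
      intro w h1 h2
      rw [hU] at h1
      exact R_bound n k r w hr hrk δ hδ1 (by omega) h2 hkδ)
    (Real.exp_pos _).le
  refine le_trans ?_ (hc.trans (add_le_add le_rfl ?_))
  · apply le_of_eq
    congr
  · refine (sum_supersets n U (fun w => (w : ℝ) < δ * n)
      (fun w => ((((n : ℝ) / (2 * w)) ^ (k - r + 1)) ^ (jth k r ε u w + 1))⁻¹)
      (fun w => by positivity)).trans ?_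
    rw [hU]
    calc _ ≤ ∑ s ∈ Finset.range (n + 1), Real.exp (-(u : ℝ)) * Real.exp (-1) ^ s := by
          refine Finset.sum_le_sum fun s _ => ?_
          split_ifs with hD
          · exact tail_bound n k r u s ε δ hε0 hδ0 hδ1 hδε hu0 hD
          · rw [mul_zero]; positivity
      _ = Real.exp (-(u : ℝ)) * ∑ s ∈ Finset.range (n + 1), Real.exp (-1) ^ s := by
          rw [Finset.mul_sum]
      _ ≤ Real.exp (-(u : ℝ)) * 2 := by
          have := geom_sum_le n
          gcongr
      _ = _ := by ring

lemma exists_consts (k r : ℕ) (hr : 3 ≤ r) (hrk : r ≤ k) (μ : ℝ) (hμ : muc k r < μ) :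
    ∃ x ε δ c0 : ℝ, 0 < x ∧ x < 1 ∧ 0 < ε ∧ ε < 1 ∧ 0 < δ ∧ δ ≤ 1 / 8 ∧ 2 * k * δ ≤ ε ∧
      (2 * δ) ^ ε ≤ Real.exp (-3) ∧ 0 < c0 ∧
      -Real.log x * ((k.choose (r - 1) : ℝ) * muc k r + ε)
        - (1 - x) * (1 - ε) ^ 3 * μ * (k.choose (r - 1) : ℝ) ≤ -c0 := by
  have hμc := muc_pos k r hr hrk
  have hμ0 : 0 < μ := by linarith
  set K : ℝ := (k.choose (r - 1) : ℝ) with hK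
  have hK0 : 0 < K := by
    rw [hK]; exact_mod_cast Nat.choose_pos (by omega)
  have hq1 : muc k r / μ < 1 := by rw [div_lt_one hμ0]; exact hμ
  have hq0 : 0 < muc k r / μ := by positivity
  obtain ⟨x, hxl, hx1⟩ := exists_between hq1
  have hx0 : 0 < x := by linarith
  have hxμ : muc k r < x * μ := by rwa [div_lt_iff₀ hμ0] at hxl
  have hlog : -Real.log x * x ≤ 1 - x := by
    have := Real.log_le_sub_one_of_pos (x := x⁻¹) (by positivity)
    rw [Real.log_inv] at this
    have h2 := mul_le_mul_of_nonneg_right this hx0.le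
    rw [sub_mul, inv_mul_cancel₀ hx0.ne', one_mul] at h2
    exact h2
  have hL : 0 < -Real.log x := by linarith [Real.log_neg hx0 hx1]
  have hgap : -Real.log x * (K * muc k r) - (1 - x) * μ * K < 0 := by
    have h1 : -Real.log x * muc k r < (1 - x) * μ := by
      calc -Real.log x * muc k r < -Real.log x * (x * μ) := by gcongr
        _ = (-Real.log x * x) * μ := by ring
        _ ≤ _ := by gcongr
    nlinarith
  set g := -Real.log x * (K * muc k r) - (1 - x) * μ * K with hg
  have hcont : Filter.Tendsto (fun ε : ℝ => -Real.log x * (K * muc k r + ε)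
        - (1 - x) * (1 - ε) ^ 3 * μ * K) (nhdsWithin 0 (Set.Ioi 0)) (nhds g) := by
    have hc : Continuous (fun ε : ℝ => -Real.log x * (K * muc k r + ε)
        - (1 - x) * (1 - ε) ^ 3 * μ * K) := by fun_prop
    have := hc.tendsto 0
    have e : -Real.log x * (K * muc k r + 0) - (1 - x) * (1 - 0) ^ 3 * μ * K = g := by
      rw [hg]; ring
    rw [e] at this
    exact this.mono_left nhdsWithin_le_nhds
  have hev := hcont.eventually (gt_mem_nhds (show g < g / 2 by linarith))
  have hev2 : ∀ᶠ ε : ℝ in nhdsWithin 0 (Set.Ioi 0), ε ∈ Set.Ioo (0 : ℝ) 1 :=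
    Ioo_mem_nhdsGT one_pos
  obtain ⟨ε, h1, hε0, hε1⟩ := (hev.and hev2).exists
  have hk0 : (0 : ℝ) < k := by
    have : 0 < k := by omega
    exact_mod_cast this
  refine ⟨x, ε, min (1 / 8) (min (ε / (2 * k)) (Real.exp (-3 / ε) / 2)), -(g / 2), hx0, hx1, hε0,
    hε1, by positivity, min_le_left _ _, ?_, ?_, by linarith, by linarith⟩
  · have : min (1 / 8) (min (ε / (2 * k)) (Real.exp (-3 / ε) / 2)) ≤ ε / (2 * k) :=
      (min_le_right _ _).trans (min_le_left _ _)
    rw [le_div_iff₀ (by positivity)] at this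
    linarith
  · have h2 : min (1 / 8) (min (ε / (2 * k)) (Real.exp (-3 / ε) / 2)) ≤ Real.exp (-3 / ε) / 2 :=
      (min_le_right _ _).trans (min_le_right _ _)
    have h3 : 2 * min (1 / 8) (min (ε / (2 * k)) (Real.exp (-3 / ε) / 2)) ≤ Real.exp (-3 / ε) := by
      linarith
    refine (Real.rpow_le_rpow (by positivity) h3 hε0.le).trans (le_of_eq ?_)
    rw [← Real.exp_mul]
    congr 1
    field_simp

end Final

/-- Theorem 2 / `thm:main1`: for local functions with MDS inverse image
of dimension `r-1` and `m = ⌈μ n^{r-1}/u(n)^{r-2}⌉` with `μ > μ_c(k,r)`, there are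
`α ∈ (0,1)` and `c > 0` such that with probability `≥ 1 - exp(-c u(n))` every zero-optimal
point of LOCAL (with the first `u(n)` variables fixed to the planted values) has integral
part of size at least `(1-α) n`. -/
theorem stmt1 (k r q : ℕ) (hr : 3 ≤ r) (hrk : r ≤ k) (hq : 2 ≤ q)
    (u : ℕ → ℕ) (hu : UGood u)
    (μ : ℝ) (hμ : muc k r < μ)
    (m : ℕ → ℕ) (hm : ∀ n, m n = ⌈μ * (n : ℝ) ^ (r - 1) / (u n : ℝ) ^ (r - 2)⌉₊)
    (f : (n : ℕ) → Fin (m n) → (Fin k → Fin q) → (Fin (k - r + 1) → Fin q))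
    (hf : ∀ n a, HasMDSInv q k r (f n a))
    (xs : (n : ℕ) → Fin n → Fin q) :
    ∃ α ∈ Set.Ioo (0 : ℝ) 1, ∃ c > (0 : ℝ), ∀ᶠ n in atTop,
      1 - Real.exp (-c * u n) ≤
        prG n (m n) k (fun ω : Fin (m n) → (Fin k ↪ Fin n) =>
          ∀ (b : Fin n → Fin q → ℝ) (B : Fin (m n) → (Fin k → Fin q) → ℝ),
            MemLOCAL ω b B →
            (∀ i : Fin n, (i : ℕ) < u n → b i (xs n i) = 1) →
            ZeroOptimal (f n) (fun a => f n a fun j => xs n (ω a j)) B →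
            (1 - α) * n ≤ ((integralPart b).card : ℝ)) := by
  classical
  obtain ⟨x, ε, δ, c0, hx0, hx1, hε0, hε1, hδ0, hδ1, hδ, hδε, hc0, hgap⟩ :=
    exists_consts k r hr hrk μ hμ
  have hμ0 : 0 < μ := (muc_pos k r hr hrk).trans hμ
  obtain ⟨hu1, hu2⟩ := hu
  have hc : 0 < min c0 1 / 2 := by positivity
  refine ⟨1 - δ, ⟨by linarith, by linarith⟩, min c0 1 / 2, hc, ?_⟩
  have hν : 0 < min (1 : ℝ) (ε * μ / 2) := by positivity
  filter_upwards [hu1.eventually_ge_atTop 1, hu1.eventually_ge_atTop ((r : ℝ) * r / ε),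
    hu1.eventually_ge_atTop (2 / (min c0 1 / 2)),
    hu2.eventually (gt_mem_nhds hν), Filter.eventually_ge_atTop (max k 1),
    (tendsto_natCast_atTop_atTop (R := ℝ)).eventually_ge_atTop ((k : ℝ) / δ)]
    with n h1 h2 h3 h4 h5 h6
  have hkn : k ≤ n := (le_max_left _ _).trans h5
  have hn1 : 1 ≤ n := (le_max_right _ _).trans h5
  have hn0 : (0 : ℝ) < n := by exact_mod_cast hn1
  have hu0 : 0 < u n := by
    have : (1 : ℝ) ≤ u n := h1
    exact_mod_cast this
  have hu0' : (0 : ℝ) < u n := by exact_mod_cast hu0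
  have h4a : (u n : ℝ) < n := by
    have := h4.trans_le (min_le_left _ _)
    rwa [div_lt_one hn0] at this
  have h4b : (u n : ℝ) ≤ ε * μ / 2 * n := by
    have := h4.trans_le (min_le_right _ _)
    rw [div_lt_iff₀ hn0] at this
    exact this.le
  have hm2 : μ * (n : ℝ) ^ (r - 1) / (u n : ℝ) ^ (r - 2) ≤ m n := by
    rw [hm]; exact Nat.le_ceil _
  have hm1 : 2 * (n : ℝ) ≤ ε * m n := by
    have h7 : 2 * (n : ℝ) ≤ ε * (μ * (n : ℝ) ^ (r - 1) / (u n : ℝ) ^ (r - 2)) := by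
      obtain ⟨t, rfl⟩ : ∃ t, r = t + 3 := ⟨r - 3, by omega⟩
      have e1 : t + 3 - 1 = t + 2 := by omega
      have e2 : t + 3 - 2 = t + 1 := by omega
      rw [e1, e2, mul_div_assoc', le_div_iff₀ (by positivity)]
      have h8 : (u n : ℝ) ^ t ≤ (n : ℝ) ^ t := by gcongr
      calc 2 * (n : ℝ) * (u n : ℝ) ^ (t + 1) = 2 * n * ((u n : ℝ) ^ t * u n) := by ring
        _ ≤ 2 * n * ((n : ℝ) ^ t * (ε * μ / 2 * n)) := by gcongr
        _ = _ := by ring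
    refine h7.trans ?_
    gcongr
  have hw : (r : ℝ) * r ≤ ε * u n := by
    have : (r : ℝ) * r / ε ≤ u n := h2
    rw [div_le_iff₀ hε0] at this
    linarith
  have hkδ : (k : ℝ) ≤ δ * n := by
    have : (k : ℝ) / δ ≤ n := h6
    rw [div_le_iff₀ hδ0] at this
    linarith
  have hun : u n ≤ n := by exact_mod_cast h4a.le
  have hUc : (Finset.univ.filter fun i : Fin n => (i : ℕ) < u n).card = u n := by
    rw [Fin.card_filter_val_lt]
    exact min_eq_right hun
  have hpb := prob_bound n (m n) k r (u n) hr hrk hkn ε δ x μ c0 hε0 hε1 hx0 hx1 hμ0 hc0 hδ0 hδ1 hδ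
    hu0 hδε hw hkδ hm1 hm2 hgap (Finset.univ.filter fun i : Fin n => (i : ℕ) < u n) hUc
  refine le_trans ?_ (prG_compl n (m n) k hkn _ (fun ω => ((clo r
    (Finset.univ.filter fun i : Fin n => (i : ℕ) < u n) (nbhd ω)).card : ℝ) < δ * n) ?_)
  · have h9 : Real.exp (-c0 * u n) + 2 * Real.exp (-(u n : ℝ)) ≤
        Real.exp (-(min c0 1 / 2) * u n) := by
      generalize hcc : min c0 1 / 2 = c at *
      have hcl : 2 * c ≤ c0 := by rw [← hcc]; linarith [min_le_left c0 1]
      have hcr : 2 * c ≤ 1 := by rw [← hcc]; linarith [min_le_right c0 1]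
      have a1 : Real.exp (-c0 * u n) ≤ Real.exp (-(2 * c) * u n) := by
        refine Real.exp_le_exp.2 ?_
        nlinarith
      have a2 : Real.exp (-(u n : ℝ)) ≤ Real.exp (-(2 * c) * u n) := by
        refine Real.exp_le_exp.2 ?_
        nlinarith
      have a3 : Real.exp (-c * u n) = Real.exp (-(2 * c) * u n) * Real.exp (c * u n) := by
        rw [← Real.exp_add]; congr 1; ring
      have a4 : 3 ≤ Real.exp (c * u n) := by
        have : 2 / c ≤ (u n : ℝ) := h3
        rw [div_le_iff₀ hc] at this
        have := Real.add_one_le_exp (c * u n)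
        linarith
      rw [a3]
      have := Real.exp_pos (-(2 * c) * u n)
      nlinarith
    linarith
  · intro ω hω
    simp only [not_forall] at hω
    obtain ⟨b, B, hL, hfix, hZ, hlt⟩ := hω
    have hcl := integral_closed hr hrk (f n) (hf n) _ ω b B hL hZ
    have hsub := clo_min (U := Finset.univ.filter fun i : Fin n => (i : ℕ) < u n) (by
      intro i hi
      simp only [Finset.mem_filter, Finset.mem_univ, true_and] at hi
      simp only [integralPart, Finset.mem_filter, Finset.mem_univ, true_and]
      exact ⟨_, hfix i hi⟩) hcl
    have hcard : ((clo r (Finset.univ.filter fun i : Fin n => (i : ℕ) < u n) (nbhd ω)).card : ℝ) ≤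
        ((integralPart b).card : ℝ) := by exact_mod_cast Finset.card_le_card hsub
    rw [not_le] at hlt
    have : (1 - (1 - δ)) * (n : ℝ) = δ * n := by ring
    rw [this] at hlt
    exact lt_of_le_of_lt hcard hlt
end
end

section
/- Let 2 ≤ r ≤ k, q ≥ 2, 1 ≤ l ≤ k−1, and let f_1,…,f_m : [q]^k → [q]^l be (r−1)-wise independent local functions with neighborhoods ∂(a) ⊆ {1,…,n} of size k. Let x* ∈ [q]^n and set y_a = f_a(x*|_{∂(a)}) for every a. If V' ⊆ {u+1,…,n} is a (k−r+2)-stopping set, then there exists a zero-optimal point of the local marginal polytope LOCAL (for the targets (y_a)) satisfying b_i(x*_i) = 1 for all i ∉ V' whose integral part equals {1,…,n} \ V'. Explicitly, one may take b_i uniform on [q] for i ∈ V', b_i(x*_i) = 1 for i ∉ V', and b_{(a)} uniform on the set of x^(a) ∈ f_a^{−1}(y_a) that agree with x* on ∂(a) \ V'. -/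
open Filter Finset Asymptotics

noncomputable section

/-- Lemma `lem:sslp`: if all local functions are `(r-1)`-wise independent
and `V' ⊆ {u+1,…,n}` is a `(k-r+2)`-stopping set, then the explicit family
(`b_i` uniform on `V'`, `b_i = δ_{x*_i}` off `V'`, and `B_a` uniform on the compatible part
of the fiber `f_a⁻¹(y_a)`) is a zero-optimal point of LOCAL with `b_i(x*_i) = 1` for
`i ∉ V'` and integral part `{1,…,n} \ V'`. -/
theorem stmt2 (n m q k l r u : ℕ) (hr2 : 2 ≤ r) (hrk : r ≤ k) (hq : 2 ≤ q)
    (hl1 : 1 ≤ l) (hlk : l ≤ k - 1)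
    (nb : Fin m → (Fin k ↪ Fin n))
    (f : Fin m → (Fin k → Fin q) → (Fin l → Fin q))
    (hf : ∀ a, WiseIndep q k l (r - 1) (f a))
    (xs : Fin n → Fin q)
    (V : Finset (Fin n)) (hV : ∀ i ∈ V, u ≤ (i : ℕ))
    (hss : IsStoppingSet (k - r + 2) nb V) :
    let y : Fin m → Fin l → Fin q := fun a => f a fun j => xs (nb a j)
    let b : Fin n → Fin q → ℝ := fun i x =>
      if i ∈ V then 1 / (q : ℝ) else if x = xs i then 1 else 0
    let S : Fin m → Finset (Fin k → Fin q) := fun a =>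
      Finset.univ.filter fun z : Fin k → Fin q =>
        f a z = y a ∧ ∀ j : Fin k, nb a j ∉ V → z j = xs (nb a j)
    let B : Fin m → (Fin k → Fin q) → ℝ := fun a z =>
      if z ∈ S a then 1 / ((S a).card : ℝ) else 0
    MemLOCAL nb b B ∧ ZeroOptimal f y B ∧ (∀ i ∉ V, b i (xs i) = 1) ∧
      integralPart b = Finset.univ \ V := by
  intro y b S B
  have hq0 : (0:ℝ) < q := by exact_mod_cast (by omega : 0 < q)
  have hSne : ∀ a, (0:ℝ) < ((S a).card : ℝ) := by
    intro a
    have : (fun j => xs (nb a j)) ∈ S a := by simp [S, y]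
    exact_mod_cast Finset.card_pos.mpr ⟨_, this⟩
  have hb1 : ∀ i ∉ V, b i (xs i) = 1 := by
    intro i hi
    simp [b, hi]
  have hmarg : ∀ a j x, (∑ z : Fin k → Fin q, if z j = x then B a z else 0)
      = (((S a).filter fun z => z j = x).card : ℝ) / ((S a).card : ℝ) := by
    intro a j x
    have h1 : ∀ z : Fin k → Fin q, (if z j = x then B a z else 0)
        = if z ∈ (S a).filter (fun z => z j = x) then 1 / ((S a).card : ℝ) else 0 := by
      intro z
      by_cases h : z j = x <;> by_cases h' : z ∈ S a <;> simp [B, h, h']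
    rw [Finset.sum_congr rfl fun z _ => h1 z, Finset.sum_ite_mem, Finset.univ_inter,
      Finset.sum_const, nsmul_eq_mul]
    ring
  have hcount : ∀ a j, nb a j ∈ V → ∀ x,
      (S a).card = q * ((S a).filter fun z => z j = x).card := by
    intro a j hj x
    set T : Finset (Fin k) := Finset.univ.filter fun j => nb a j ∉ V with hT
    have hc1 : (nbhd nb a ∩ V).card = (Finset.univ.filter fun j => nb a j ∈ V).card := by
      rw [← Finset.card_map (nb a)]
      congr 1
      ext i
      simp only [nbhd, Finset.mem_inter, Finset.mem_image, Finset.mem_univ, true_and,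
        Finset.mem_map, Finset.mem_filter]
      constructor
      · rintro ⟨⟨t, rfl⟩, h⟩
        exact ⟨t, h, rfl⟩
      · rintro ⟨t, h, rfl⟩
        exact ⟨⟨t, rfl⟩, h⟩
    have hc2 : (Finset.univ.filter fun j => nb a j ∈ V).card + T.card = k := by
      have := Finset.card_filter_add_card_filter_not (s := (Finset.univ : Finset (Fin k)))
        (fun j => nb a j ∈ V)
      simpa [hT] using this
    have hpos : 0 < (Finset.univ.filter fun j => nb a j ∈ V).card :=
      Finset.card_pos.mpr ⟨j, by simp [hj]⟩
    have hjT : j ∉ T := by simp [hT, hj]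
    have hcard : (insert j T).card ≤ r - 1 := by
      rw [Finset.card_insert_of_notMem hjT]
      rcases hss a with h | h <;> omega
    have hfib : ∀ x, ((S a).filter fun z => z j = x).card
        = q ^ (k - (insert j T).card - l) := by
      intro x
      rw [← hf a (insert j T) hcard (fun t => if t = j then x else xs (nb a t)) (y a)]
      congr 1
      ext z
      simp only [S, Finset.mem_filter, Finset.mem_univ, true_and, Finset.mem_insert, hT]
      constructor
      · rintro ⟨⟨h1, h2⟩, h3⟩
        refine ⟨?_, h1⟩
        intro t ht
        by_cases e : t = j
        · subst e; simpa using h3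
        · simpa [e] using h2 t (ht.resolve_left e)
      · rintro ⟨h1, h2⟩
        refine ⟨⟨h2, ?_⟩, by simpa using h1 j (Or.inl rfl)⟩
        intro t ht
        have e : t ≠ j := by rintro rfl; exact ht hj
        simpa [e] using h1 t (Or.inr ht)
    rw [Finset.card_eq_sum_card_fiberwise (f := fun z => z j) (t := Finset.univ)
      (fun _ _ => by simp), Finset.sum_congr rfl fun x _ => hfib x, hfib x]
    simp
  refine ⟨⟨?_, ?_, ?_, ?_, ?_⟩, ?_, hb1, ?_⟩
  · intro i x
    simp only [b]
    split_ifs <;> positivity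
  · intro i
    by_cases hi : i ∈ V
    · simp [b, hi, hq0.ne']
    · simp [b, hi]
  · intro a z
    simp only [B]
    split_ifs <;> positivity
  · intro a
    have := (hSne a).ne'
    simp only [B]
    rw [Finset.sum_ite_mem, Finset.univ_inter, Finset.sum_const, nsmul_eq_mul]
    field_simp
  · intro a j x
    rw [hmarg]
    have hS := hSne a
    by_cases hi : nb a j ∈ V
    · have h := hcount a j hi x
      have h' : ((S a).card : ℝ) = q * (((S a).filter fun z => z j = x).card : ℝ) := by
        exact_mod_cast h
      rw [eq_div_iff hS.ne']
      simp only [b, hi, if_true]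
      rw [h']
      field_simp
    · by_cases hx : x = xs (nb a j)
      · have : (S a).filter (fun z => z j = x) = S a := by
          apply Finset.filter_true_of_mem
          intro z hz
          rw [hx]
          exact (Finset.mem_filter.mp hz).2.2 j hi
        rw [this, div_self hS.ne']
        simp [b, hi, hx]
      · have : (S a).filter (fun z => z j = x) = ∅ := by
          apply Finset.filter_false_of_mem
          intro z hz hzx
          exact hx (hzx.symm.trans ((Finset.mem_filter.mp hz).2.2 j hi))
        rw [this]
        simp [b, hi, hx]
  · intro a z hz
    by_cases h : z ∈ S a
    · exact (Finset.mem_filter.mp h).2.1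
    · simp [B, h] at hz
  · ext i
    simp only [integralPart, Finset.mem_filter, Finset.mem_univ, true_and, Finset.mem_sdiff]
    constructor
    · rintro ⟨x, hx⟩ hi
      simp only [b, hi, if_true] at hx
      rw [div_eq_one_iff_eq hq0.ne'] at hx
      have : (1:ℕ) = q := by exact_mod_cast hx
      omega
    · intro hi
      exact ⟨_, hb1 i hi⟩
end
end

section
/- Let 2 ≤ r ≤ k and q ≥ 2, and let f_1,…,f_m : [q]^k → [q]^{k−r+1} be local functions with neighborhoods ∂(a) ⊆ {1,…,n} of size k, all having MDS inverse image of dimension r−1, with target outputs y_a ∈ [q]^{k−r+1}. If a point of the local marginal polytope LOCAL is zero-optimal and its integral part is V'' ⊆ {1,…,n}, then the complement {1,…,n} \ V'' is a (k−r+2)-stopping set. -/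
open Filter Finset Asymptotics

noncomputable section

/-- Lemma `lem:lpss`: if all local functions have MDS inverse image of
dimension `r-1` and a point of LOCAL is zero-optimal with integral part `V''`, then
`{1,…,n} \ V''` is a `(k-r+2)`-stopping set. -/
theorem stmt3 (n m q k r : ℕ) (hr2 : 2 ≤ r) (hrk : r ≤ k) (hq : 2 ≤ q)
    (nb : Fin m → (Fin k ↪ Fin n))
    (f : Fin m → (Fin k → Fin q) → (Fin (k - r + 1) → Fin q))
    (hf : ∀ a, HasMDSInv q k r (f a))
    (y : Fin m → Fin (k - r + 1) → Fin q)
    (b : Fin n → Fin q → ℝ) (B : Fin m → (Fin k → Fin q) → ℝ)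
    (hmem : MemLOCAL nb b B) (hzero : ZeroOptimal f y B) :
    IsStoppingSet (k - r + 2) nb (Finset.univ \ integralPart b) := by
  classical
  obtain ⟨hb0, hb1, hB0, hB1, hmar⟩ := hmem
  intro a
  have key : ∀ j x, b (nb a j) x = 1 → ∀ z, B a z ≠ 0 → z j = x := by
    intro j x hx z hz
    by_contra hne
    have h1 : ∑ z : Fin k → Fin q, (B a z - if z j = x then B a z else 0) = 0 := by
      rw [Finset.sum_sub_distrib, hB1, ← hmar, hx, sub_self]
    rw [Finset.sum_eq_zero_iff_of_nonneg] at h1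
    · have := h1 z (Finset.mem_univ _)
      simp [hne] at this
      exact hz this
    · intro z _
      split_ifs
      · simp
      · simpa using hB0 a z
  by_cases hall : ∃ z z', B a z ≠ 0 ∧ B a z' ≠ 0 ∧ z ≠ z'
  · right
    obtain ⟨z, z', hz, hz', hne⟩ := hall
    have hd : k - r + 2 ≤ hammingDist z z' := by
      rw [← (hf a (y a)).2]
      apply Nat.sInf_le
      exact ⟨z, by simp [hzero a z hz], z', by simp [hzero a z' hz'], hne, rfl⟩
    refine hd.trans ?_
    unfold hammingDist
    rw [← Finset.card_map (nb a)]
    apply Finset.card_le_card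
    intro i hi
    simp only [Finset.mem_map, Finset.mem_filter, Finset.mem_univ, true_and] at hi
    obtain ⟨j, hj, rfl⟩ := hi
    simp only [nbhd, integralPart, Finset.mem_inter, Finset.mem_image, Finset.mem_univ,
      true_and, Finset.mem_sdiff, Finset.mem_filter]
    refine ⟨⟨j, rfl⟩, ?_⟩
    rintro ⟨x, hx⟩
    exact hj ((key j x hx z hz).trans (key j x hx z' hz').symm)
  · left
    push Not at hall
    rw [Finset.card_eq_zero, Finset.eq_empty_iff_forall_notMem]
    intro i hi
    simp only [nbhd, integralPart, Finset.mem_inter, Finset.mem_image, Finset.mem_univ,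
      true_and, Finset.mem_sdiff, Finset.mem_filter] at hi
    obtain ⟨⟨j, rfl⟩, hi⟩ := hi
    obtain ⟨z, hz⟩ : ∃ z, B a z ≠ 0 := by
      by_contra h
      push Not at h
      have := hB1 a
      simp [h] at this
    apply hi
    refine ⟨z j, ?_⟩
    rw [hmar, ← hB1 a]
    apply Finset.sum_congr rfl
    intro w _
    split_ifs with h
    · rfl
    · by_contra hw
      exact h (by rw [hall w z (Ne.symm hw) hz])
end
end

section
/- Let q ≥ 2, k ≥ 2, 1 ≤ l ≤ k−1, and let f_1,…,f_m : [q]^k → [q]^l be local functions with neighborhoods ∂(a) ⊆ {1,…,n} of size k, each of which is 1-wise independent. Then for any targets y_a ∈ [q]^l, the family defined by b_i(x) = 1/q for all i ∈ {1,…,n} and x ∈ [q], and b_{(a)}(x^(a)) = 1{f_a(x^(a)) = y_a} / |f_a^{−1}(y_a)| for all a and x^(a) ∈ [q]^k, is a well-defined point of the local marginal polytope LOCAL and is zero-optimal. In particular, the LP relaxation over LOCAL without any fixed variables always admits a zero-objective solution whose integral part is empty. -/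
open Filter Finset Asymptotics

noncomputable section

/-- for 1-wise independent local functions, the uniform family
(`b_i ≡ 1/q` and `B_a` uniform on the fiber `f_a⁻¹(y_a)`) is a well-defined zero-optimal
point of LOCAL whose integral part is empty. -/
theorem stmt6 (n m q k l : ℕ) (hq : 2 ≤ q) (hk : 2 ≤ k) (hl1 : 1 ≤ l) (hlk : l ≤ k - 1)
    (nb : Fin m → (Fin k ↪ Fin n))
    (f : Fin m → (Fin k → Fin q) → (Fin l → Fin q))
    (hf : ∀ a, WiseIndep q k l 1 (f a))
    (y : Fin m → Fin l → Fin q) :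
    let b : Fin n → Fin q → ℝ := fun _ _ => 1 / (q : ℝ)
    let B : Fin m → (Fin k → Fin q) → ℝ := fun a z =>
      if f a z = y a then
        1 / ((Finset.univ.filter fun z' : Fin k → Fin q => f a z' = y a).card : ℝ)
      else 0
    MemLOCAL nb b B ∧ ZeroOptimal f y B ∧ integralPart b = ∅ := by
  intro b B
  have hq0 : (q : ℝ) ≠ 0 := by
    have : q ≠ 0 := by omega
    exact_mod_cast this
  have hc : ∀ a, (Finset.univ.filter fun z' : Fin k → Fin q => f a z' = y a).card
      = q ^ (k - l) := by
    intro a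
    have h := hf a ∅ (by simp) (fun _ => ⟨0, by omega⟩) (y a)
    simpa using h
  have hc1 : ∀ a (j : Fin k) (x : Fin q),
      (Finset.univ.filter fun z : Fin k → Fin q => z j = x ∧ f a z = y a).card
      = q ^ (k - 1 - l) := by
    intro a j x
    have h := hf a {j} (by simp) (fun _ => x) (y a)
    simpa using h
  refine ⟨⟨?_, ?_, ?_, ?_, ?_⟩, ?_, ?_⟩
  · intro i x
    simp only [b]
    positivity
  · intro i
    simp [b, hq0]
  · intro a z
    simp only [B]
    split_ifs <;> positivity
  · intro a
    simp only [B]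
    rw [← Finset.sum_filter, Finset.sum_const, nsmul_eq_mul, hc]
    push_cast
    field_simp
  · intro a j x
    have h2 : ∀ z : Fin k → Fin q, (if z j = x then B a z else 0)
        = if (z j = x ∧ f a z = y a) then 1 / ((q : ℝ) ^ (k - l)) else 0 := by
      intro z
      simp only [B, hc]
      push_cast
      rw [ite_and]
    rw [Finset.sum_congr rfl (fun z _ => h2 z), ← Finset.sum_filter, Finset.sum_const,
      nsmul_eq_mul, hc1]
    have h3 : k - l = (k - 1 - l) + 1 := by omega
    simp only [b]
    rw [h3, pow_succ]
    push_cast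
    field_simp
  · intro a z h
    by_contra hne
    exact h (by simp only [B]; rw [if_neg hne])
  · simp only [integralPart, b]
    apply Finset.filter_eq_empty_iff.mpr
    rintro i - ⟨x, hx⟩
    rw [div_eq_one_iff_eq hq0] at hx
    have : (1 : ℕ) = q := by exact_mod_cast hx
    omega
end
end

section
/- Fix integers 2 ≤ d ≤ k and reals α ∈ (0,1), μ > 1/k, and ε ∈ (0, μk−1). For the random bipartite graph ensemble with n variables and m = ⌈μ·n·log n⌉ constraints, the probability that there exists a nonempty d-stopping set of size at most αn is O(n^{1−μk+ε}) as n → ∞. In particular, with probability 1 − O(n^{1−μk+ε}) the random bipartite graph has no nonempty d-stopping set of size at most αn. -/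
open Filter Finset Asymptotics

noncomputable section

lemma card_one_lower {n k' : ℕ} (V : Finset (Fin n)) :
    (k' + 1) * (V.card * (n - V.card).descFactorial k') ≤
      (Finset.univ.filter fun f : Fin (k' + 1) ↪ Fin n =>
        (Finset.univ.image f ∩ V).card = 1).card := by
  classical
  have hc : Fintype.card (Fin (k' + 1) × (V × (Fin k' ↪ (Vᶜ : Finset (Fin n))))) =
      (k' + 1) * (V.card * (n - V.card).descFactorial k') := by
    simp [Fintype.card_embedding_eq, Finset.card_compl]
  rw [← hc, ← Finset.card_univ]
  have hnot : ∀ (g : Fin k' ↪ (Vᶜ : Finset (Fin n))) i, (g i : Fin n) ∉ V := fun g i =>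
    Finset.mem_compl.1 (g i).2
  have hinj : ∀ x : Fin (k' + 1) × (V × (Fin k' ↪ (Vᶜ : Finset (Fin n)))),
      Function.Injective (Fin.insertNth (α := fun _ => Fin n) x.1 (x.2.1 : Fin n)
        (fun i => (x.2.2 i : Fin n))) := by
    rintro ⟨j, v, g⟩
    intro a b hab
    rcases Fin.eq_self_or_eq_succAbove j a with h1 | ⟨a', rfl⟩ <;>
      rcases Fin.eq_self_or_eq_succAbove j b with h2 | ⟨b', rfl⟩
    · rw [h1, h2]
    · subst h1
      simp only [Fin.insertNth_apply_same, Fin.insertNth_apply_succAbove] at hab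
      exact absurd v.2 (hab ▸ hnot g b')
    · subst h2
      simp only [Fin.insertNth_apply_same, Fin.insertNth_apply_succAbove] at hab
      exact absurd v.2 (hab ▸ hnot g a')
    · simp only [Fin.insertNth_apply_succAbove] at hab
      rw [g.injective (Subtype.ext hab)]
  refine Finset.card_le_card_of_injOn
    (fun x => (⟨_, hinj x⟩ : Fin (k' + 1) ↪ Fin n)) ?_ ?_
  · rintro ⟨j, v, g⟩ -
    simp only [Finset.coe_filter, Finset.mem_univ, true_and, Set.mem_ofPred_eq]
    rw [Finset.card_eq_one]
    refine ⟨v, ?_⟩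
    ext w
    simp only [Finset.mem_inter, Finset.mem_image, Finset.mem_univ, true_and,
      Function.Embedding.coeFn_mk, Finset.mem_singleton]
    constructor
    · rintro ⟨⟨i, rfl⟩, hw⟩
      rcases Fin.eq_self_or_eq_succAbove j i with rfl | ⟨i', rfl⟩
      · simp
      · simp only [Fin.insertNth_apply_succAbove] at hw
        exact absurd hw (hnot g i')
    · rintro rfl
      exact ⟨⟨j, by simp⟩, v.2⟩
  · rintro ⟨j, v, g⟩ - ⟨j', v', g'⟩ - h
    have h' : ∀ i, Fin.insertNth (α := fun _ => Fin n) j (v : Fin n) (fun i => (g i : Fin n)) i =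
      Fin.insertNth (α := fun _ => Fin n) j' (v' : Fin n) (fun i => (g' i : Fin n)) i :=
      fun i => DFunLike.congr_fun h i
    have hj : j = j' := by
      rcases Fin.eq_self_or_eq_succAbove j' j with h1 | ⟨i', h1⟩
      · exact h1
      · have := h' j
        rw [Fin.insertNth_apply_same] at this
        rw [h1, Fin.insertNth_apply_succAbove] at this
        exact absurd v.2 (this ▸ hnot g' i')
    subst hj
    have hv : v = v' := Subtype.ext (by simpa using h' j)
    have hg : g = g' := by
      ext i
      simpa using congrArg Fin.val (h' (j.succAbove i))
    rw [hv, hg]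

lemma pr_V {n m k' d : ℕ} (hd : 2 ≤ d) (hn : k' + 1 ≤ n) (V : Finset (Fin n)) :
    prG n m (k' + 1) (fun ω => IsStoppingSet d ω V) ≤
      Real.exp (-((m : ℝ) * ((k' + 1 : ℕ) * ((V.card : ℝ) / n) *
        (((n - V.card + 1 - k' : ℕ) : ℝ) / n) ^ k'))) := by
  classical
  set A := Finset.univ.filter fun f : Fin (k' + 1) ↪ Fin n =>
        (Finset.univ.image f ∩ V).card = 1 with hA
  have hnpos : (0 : ℝ) < n := by exact_mod_cast (by omega : 0 < n)
  have hE : Fintype.card (Fin (k' + 1) ↪ Fin n) = n.descFactorial (k' + 1) := by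
    simp [Fintype.card_embedding_eq]
  set E := Fintype.card (Fin (k' + 1) ↪ Fin n) with hEdef
  have hEpos : (0 : ℝ) < E := by
    rw [hE]; exact_mod_cast Nat.descFactorial_pos.2 hn
  have hEle : (E : ℝ) ≤ (n : ℝ) ^ (k' + 1) := by
    rw [hE]; exact_mod_cast Nat.descFactorial_le_pow _ _
  have hAc : (Aᶜ.card : ℝ) = E - A.card := by
    rw [Finset.card_compl, Nat.cast_sub (Finset.card_le_univ _)]
  have hAlow : ((k' + 1 : ℕ) : ℝ) * (V.card * ((n - V.card + 1 - k' : ℕ) : ℝ) ^ k') ≤ A.card := by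
    have h1 := card_one_lower (k' := k') V
    have h2 := Nat.pow_sub_le_descFactorial (n - V.card) k'
    have h3 : (k' + 1) * (V.card * (n - V.card + 1 - k') ^ k') ≤ A.card :=
      le_trans (by gcongr) h1
    exact_mod_cast h3
  set q : ℝ := (k' + 1 : ℕ) * ((V.card : ℝ) / n) *
        (((n - V.card + 1 - k' : ℕ) : ℝ) / n) ^ k' with hq
  have hqA : q ≤ A.card / E := by
    have : q = ((k' + 1 : ℕ) : ℝ) * (V.card * ((n - V.card + 1 - k' : ℕ) : ℝ) ^ k') / n ^ (k' + 1) := by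
      rw [hq, div_pow]; field_simp; ring
    rw [this]
    gcongr
  have hcount : ((Finset.univ.filter fun ω : Fin m → (Fin (k' + 1) ↪ Fin n) =>
      IsStoppingSet d ω V).card : ℝ) ≤ (Aᶜ.card : ℝ) ^ m := by
    have : (Finset.univ.filter fun ω : Fin m → (Fin (k' + 1) ↪ Fin n) =>
      IsStoppingSet d ω V) ⊆ Fintype.piFinset (fun _ : Fin m => Aᶜ) := by
      intro ω hω
      simp only [Finset.mem_filter, Finset.mem_univ, true_and] at hω
      rw [Fintype.mem_piFinset]
      intro a
      have := hω a
      unfold nbhd at this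
      simp only [hA, Finset.mem_compl, Finset.mem_filter, Finset.mem_univ, true_and]
      omega
    have h2 := Finset.card_le_card this
    rw [Fintype.card_piFinset] at h2
    simp only [Finset.prod_const, Finset.card_univ, Fintype.card_fin] at h2
    exact_mod_cast h2
  unfold prG
  have hden : (Fintype.card (Fin m → (Fin (k' + 1) ↪ Fin n)) : ℝ) = (E : ℝ) ^ m := by
    rw [Fintype.card_fun, Fintype.card_fin]; push_cast; rfl
  rw [hden]
  calc _ ≤ (Aᶜ.card : ℝ) ^ m / (E : ℝ) ^ m := by
        gcongr
        refine le_of_eq_of_le ?_ hcount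
        congr
    _ = (1 - A.card / E) ^ m := by
        rw [← div_pow, hAc, sub_div, div_self hEpos.ne']
    _ ≤ (Real.exp (-q)) ^ m := by
        apply pow_le_pow_left₀
        · rw [sub_nonneg, div_le_one hEpos]
          exact_mod_cast Finset.card_le_univ _
        · have := Real.one_sub_le_exp_neg q
          linarith
    _ = _ := by
        rw [← Real.exp_nat_mul]; congr 1; ring

lemma prG_union {n m k : ℕ} (S : Finset (Finset (Fin n)))
    (Q : Finset (Fin n) → Prop) (hS : ∀ V, Q V → V ∈ S) (R : (Fin m → (Fin k ↪ Fin n)) → Finset (Fin n) → Prop) :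
    prG n m k (fun ω => ∃ V, Q V ∧ R ω V) ≤ ∑ V ∈ S.filter (fun V => (Classical.decPred Q V).decide = true), prG n m k (fun ω => R ω V) := by
  classical
  unfold prG
  rw [← Finset.sum_div]
  gcongr
  rw [← Nat.cast_sum]
  have : (Finset.univ.filter fun ω => ∃ V, Q V ∧ R ω V) ⊆
      (S.filter (fun V => (Classical.decPred Q V).decide = true)).biUnion fun V => Finset.univ.filter fun ω => R ω V := by
    intro ω hω
    simp only [Finset.mem_filter, Finset.mem_univ, true_and] at hω
    obtain ⟨V, h1, h2⟩ := hω
    simp only [Finset.mem_biUnion, Finset.mem_filter, Finset.mem_univ, true_and]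
    exact ⟨V, ⟨hS V h1, by simpa using h1⟩, h2⟩
  have h3 := (Finset.card_le_card this).trans Finset.card_biUnion_le
  refine Nat.cast_le.2 (le_of_eq_of_le ?_ (h3.trans_eq ?_)) <;> congr

lemma prG_union' {n m k : ℕ} (S : Finset (Finset (Fin n)))
    (Q : Finset (Fin n) → Prop) (hS : ∀ V, Q V → V ∈ S)
    (R : (Fin m → (Fin k ↪ Fin n)) → Finset (Fin n) → Prop)
    (g : Finset (Fin n) → ℝ) (hg : ∀ V, 0 ≤ g V)
    (hgR : ∀ V, Q V → prG n m k (fun ω => R ω V) ≤ g V) :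
    prG n m k (fun ω => ∃ V, Q V ∧ R ω V) ≤ ∑ V ∈ S, g V := by
  refine (prG_union S Q hS R).trans ((Finset.sum_le_sum (g := g) ?_).trans ?_)
  · intro V hVm
    exact hgR V (@of_decide_eq_true _ (Classical.decPred Q V) (Finset.mem_filter.1 hVm).2)
  · exact Finset.sum_le_sum_of_subset_of_nonneg (Finset.filter_subset _ _)
      (fun V _ _ => hg V)

lemma sum_pow_card {n : ℕ} (r : ℝ) :
    ∑ V : Finset (Fin n), r ^ V.card = (1 + r) ^ n := by
  have := Fintype.sum_pow_mul_eq_add_pow (Fin n) r (1 : ℝ)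
  simp only [one_pow, mul_one, Fintype.card_fin] at this
  rw [this, add_comm]

set_option maxHeartbeats 1000000 in
/-- Lemma `lem:small`: for `m = ⌈μ n log n⌉` with `μ > 1/k` and
`ε ∈ (0, μk - 1)`, the probability that the random bipartite graph has a nonempty
`d`-stopping set of size at most `αn` is `O(n^{1-μk+ε})`. -/
theorem stmt7 (d k : ℕ) (hd : 2 ≤ d) (hdk : d ≤ k)
    (α : ℝ) (hα : α ∈ Set.Ioo (0 : ℝ) 1)
    (μ ε : ℝ) (hμ : 1 / (k : ℝ) < μ) (hε : ε ∈ Set.Ioo (0 : ℝ) (μ * k - 1)) :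
    (fun n : ℕ => prG n ⌈μ * (n : ℝ) * Real.log n⌉₊ k
        (fun ω : Fin ⌈μ * (n : ℝ) * Real.log n⌉₊ → (Fin k ↪ Fin n) =>
          ∃ V : Finset (Fin n), V.Nonempty ∧ (V.card : ℝ) ≤ α * n ∧ IsStoppingSet d ω V))
      =O[atTop] fun n : ℕ => (n : ℝ) ^ (1 - μ * k + ε) := by
  obtain ⟨k', rfl⟩ : ∃ k', k = k' + 1 := ⟨k - 1, by omega⟩
  obtain ⟨hα0, hα1⟩ := hα
  obtain ⟨hε0, hε1⟩ := hε
  set K : ℝ := ((k' + 1 : ℕ) : ℝ) with hK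
  have hKk : K = k' + 1 := by rw [hK]; push_cast; rfl
  have hKpos : 0 < K := by rw [hKk]; positivity
  have hμ0 : 0 < μ := lt_trans (by positivity) hμ
  have hμK : 0 < μ * K := by positivity
  set β : ℝ := ε / (μ * K * K) with hβ
  have hβ0 : 0 < β := by positivity
  have hβK : μ * K * (K * β) = ε := by rw [hβ]; field_simp
  have hK1 : 1 ≤ K := by rw [hKk]; linarith [Nat.cast_nonneg (α := ℝ) k']
  have hβ1 : β < 1 := by
    rw [hβ, div_lt_one (by positivity)]
    nlinarith
  have hbern : μ * K - ε ≤ μ * K * (1 - β) ^ k' := by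
    have h := one_add_mul_le_pow (a := -β) (by linarith) k'
    have h2 : 1 - K * β ≤ (1 - β) ^ k' := by
      rw [hKk, sub_eq_add_neg 1 β]; nlinarith
    nlinarith [mul_le_mul_of_nonneg_left h2 hμK.le]
  set c : ℝ := μ * K * (β / 2) * ((1 - α) / 2) ^ k' with hc
  have hα' : 0 < 1 - α := by linarith
  have hc0 : 0 < c := by positivity
  set γ : ℝ := μ * K - 1 - ε with hγ
  have hγ0 : 0 < γ := by rw [hγ]; linarith
  have hlog : Tendsto (fun n : ℕ => Real.log (n : ℝ)) atTop atTop :=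
    Real.tendsto_log_atTop.comp tendsto_natCast_atTop_atTop
  refine IsBigO.of_bound 3 ?_
  filter_upwards [eventually_ge_atTop (k' + 1),
    tendsto_natCast_atTop_atTop.eventually_ge_atTop (2 * K / β),
    tendsto_natCast_atTop_atTop.eventually_ge_atTop (2 * K / (1 - α)),
    hlog.eventually_ge_atTop ((Real.log 2 + γ) / c)] with n hn hn2 hn3 hn4
  have hn1 : (1 : ℝ) ≤ n := by exact_mod_cast (by omega : 1 ≤ n)
  have hnpos : (0 : ℝ) < n := by linarith
  have hlog0 : 0 ≤ Real.log n := Real.log_nonneg hn1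
  set L := Real.log n with hL
  set m := ⌈μ * (n : ℝ) * L⌉₊ with hm
  have hmle : μ * n * L ≤ m := Nat.le_ceil _
  rw [div_le_iff₀ hβ0] at hn2
  rw [div_le_iff₀ hα'] at hn3
  rw [div_le_iff₀ hc0] at hn4
  set r : ℝ := Real.exp (-((μ * K - ε) * L)) with hr
  set t : ℝ := Real.exp (-(c * n * L)) with ht
  have hrp : 0 < r := Real.exp_pos _
  have htp : 0 < t := Real.exp_pos _
  have hgoal : (n : ℝ) ^ (1 - μ * K + ε) = Real.exp (-(γ * L)) := by
    rw [Real.rpow_def_of_pos hnpos, hγ]; congr 1; ring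
  have hnr : n * r = Real.exp (-(γ * L)) := by
    rw [hr]; nth_rewrite 1 [← Real.exp_log hnpos]
    rw [← Real.exp_add, hγ]; congr 1; ring
  -- the bound for a single set
  have hV : ∀ V : Finset (Fin n), (V.card : ℝ) ≤ α * n →
      prG n m (k' + 1) (fun ω => IsStoppingSet d ω V) ≤ r ^ V.card + t := by
    intro V hVα
    refine (pr_V hd hn V).trans ?_
    set s : ℝ := (V.card : ℝ) with hs
    have hs0 : 0 ≤ s := Nat.cast_nonneg _
    set x : ℝ := (((n - V.card + 1 - k' : ℕ) : ℝ) / n) with hx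
    have hx0 : 0 ≤ x := by positivity
    have hxlow : n - s - K ≤ x * n := by
      rw [hx, div_mul_cancel₀ _ hnpos.ne', hKk, hs]
      have : n ≤ (n - V.card + 1 - k') + V.card + (k' + 1) := by omega
      have h' : (n : ℝ) ≤ ((n - V.card + 1 - k' : ℕ) : ℝ) + V.card + (k' + 1) := by
        exact_mod_cast this
      linarith
    have hmq : μ * n * L * (K * (s / n) * x ^ k') ≤ m * (K * (s / n) * x ^ k') := by
      gcongr
    have heq : μ * n * L * (K * (s / n) * x ^ k') = (μ * K * x ^ k') * L * s := by
      field_simp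
    rw [heq] at hmq
    rcases le_or_gt s (β / 2 * n) with hcase | hcase
    · have hx1 : 1 - β ≤ x := by
        have : (1 - β) * n ≤ x * n := by nlinarith
        exact le_of_mul_le_mul_right this hnpos
      have h1 : μ * K - ε ≤ μ * K * x ^ k' := by
        refine hbern.trans ?_
        have : 0 ≤ 1 - β := by linarith
        gcongr
      have h2 : (μ * K - ε) * L * s ≤ μ * K * x ^ k' * L * s := by gcongr
      have h3 : Real.exp (-(m * (K * (s / n) * x ^ k'))) ≤ r ^ V.card := by
        rw [hr, ← Real.exp_nat_mul, Real.exp_le_exp]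
        rw [← hs]; nlinarith
      linarith
    · have hx1 : (1 - α) / 2 ≤ x := by
        have : (1 - α) / 2 * n ≤ x * n := by nlinarith
        exact le_of_mul_le_mul_right this hnpos
      have h2 : (μ * K * ((1 - α) / 2) ^ k') * L * (β / 2 * n) ≤ μ * K * x ^ k' * L * s := by
        gcongr
      have h3 : Real.exp (-(m * (K * (s / n) * x ^ k'))) ≤ t := by
        rw [ht, Real.exp_le_exp, hc]
        nlinarith
      have : 0 ≤ r ^ V.card := by positivity
      linarith
  have hsum : prG n m (k' + 1) (fun ω =>
      ∃ V : Finset (Fin n), V.Nonempty ∧ (V.card : ℝ) ≤ α * n ∧ IsStoppingSet d ω V) ≤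
      ((1 + r) ^ n - 1) + 2 ^ n * t := by
    have h1 := prG_union' (m := m) (k := k' + 1) (Finset.univ.erase (∅ : Finset (Fin n)))
      (fun V => V.Nonempty ∧ (V.card : ℝ) ≤ α * n)
      (fun V hV => Finset.mem_erase.2 ⟨hV.1.ne_empty, Finset.mem_univ _⟩)
      (fun ω V => IsStoppingSet d ω V) (fun V => r ^ V.card + t)
      (fun V => by positivity) (fun V hQ => hV V hQ.2)
    simp only [and_assoc] at h1
    refine h1.trans ?_
    calc _ = ∑ V ∈ Finset.univ.erase (∅ : Finset (Fin n)), (r ^ V.card + t) := rfl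
      _ = ∑ V : Finset (Fin n), (r ^ V.card + t) - (1 + t) := by
          rw [Finset.sum_erase_eq_sub (Finset.mem_univ _)]; simp
      _ ≤ _ := by
          rw [Finset.sum_add_distrib, sum_pow_card]
          simp only [Finset.sum_const, Finset.card_univ, Fintype.card_finset, Fintype.card_fin,
            nsmul_eq_mul]
          push_cast
          linarith
  have hA : (1 + r) ^ n - 1 ≤ 2 * Real.exp (-(γ * L)) := by
    have h1 : (1 + r) ^ n ≤ Real.exp (n * r) := by
      rw [Real.exp_nat_mul]
      have := Real.add_one_le_exp r
      gcongr
      linarith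
    have h2 : Real.exp (-(γ * L)) ≤ 1 := by
      rw [Real.exp_le_one_iff]; nlinarith
    have h3 := Real.abs_exp_sub_one_le (x := n * r) (by
      rw [hnr, abs_of_pos (Real.exp_pos _)]; exact h2)
    rw [hnr, abs_of_pos (Real.exp_pos (-(γ * L)))] at h3
    rw [hnr] at h1
    linarith [le_abs_self (Real.exp (Real.exp (-(γ * L))) - 1)]
  have hB : 2 ^ n * t ≤ Real.exp (-(γ * L)) := by
    have : (2 : ℝ) ^ n = Real.exp (n * Real.log 2) := by
      rw [Real.exp_nat_mul, Real.exp_log two_pos]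
    rw [this, ht, ← Real.exp_add, Real.exp_le_exp]
    have hLn : L ≤ n := by linarith [Real.log_le_sub_one_of_pos hnpos]
    nlinarith [mul_le_mul_of_nonneg_left hn4 hnpos.le, mul_le_mul_of_nonneg_left hLn hγ0.le]
  rw [hgoal, Real.norm_of_nonneg (by unfold prG; positivity), Real.norm_of_nonneg (Real.exp_pos _).le]
  linarith
end
end
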